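/- arXiv:0909.4250 — 2 statements merged into one kernel-verified Lean document; each statement's English description precedes it below -/
import Mathlib

section
/- Let (X, σ_X) be a one-sided subshift over a finite alphabet and let Φ = (log φ_n)_{n=1}^∞ ∈ C_sa(X, σ_X) be generated by a sub-multiplicative function φ : L(X) → [0,∞). Then sup{ Φ_*(μ) + h_μ(σ_X) : μ ∈ M(X, σ_X) } = lim_{n→∞} (1/n) log u_n, where u_n = Σ_{I ∈ L_n(X)} φ(I). -/
open MeasureTheory Filter Topology
open scoped Classical ENNReal NNReal

noncomputable section

/-- The left shift on one-sided sequences. -/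
def shiftMap {A : Type} : (ℕ → A) → (ℕ → A) := fun x n => x (n + 1)

/-- The cylinder set of a finite word. -/
def cyl {A : Type} (I : List A) : Set (ℕ → A) :=
  {x | ∀ i : Fin I.length, x i = I.get i}

/-- Membership of a word in the language of `X`. -/
def Lang {A : Type} (X : Set (ℕ → A)) (I : List A) : Prop :=
  (cyl I ∩ X).Nonempty

/-- `X` is a (nonempty) one-sided subshift. -/
def IsSubshift {A : Type} [TopologicalSpace A] (X : Set (ℕ → A)) : Prop :=
  X.Nonempty ∧ IsCompact X ∧ shiftMap '' X ⊆ X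

/-- weak `p`-specification -/
def WeakSpecification {A : Type} (X : Set (ℕ → A)) (p : ℕ) : Prop :=
  ∀ I J : List A, Lang X I → Lang X J →
    ∃ K : List A, K.length ≤ p ∧ Lang X (I ++ K ++ J)

/-- `p`-specification -/
def Specification {A : Type} (X : Set (ℕ → A)) (p : ℕ) : Prop :=
  ∀ I J : List A, Lang X I → Lang X J →
    ∃ K : List A, K.length = p ∧ Lang X (I ++ K ++ J)

/-- invariant probability measures supported on `X` (predicate on plain measures) -/
def InvOn {A : Type} [MeasurableSpace A] (X : Set (ℕ → A)) (μ : Measure (ℕ → A)) : Prop :=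
  IsProbabilityMeasure μ ∧ μ.map shiftMap = μ ∧ μ X = 1

/-- the set of shift-invariant probability measures on `X` -/
def MInv {A : Type} [MeasurableSpace A] (X : Set (ℕ → A)) :
    Set (ProbabilityMeasure (ℕ → A)) :=
  {μ | (μ : Measure (ℕ → A)).map shiftMap = (μ : Measure (ℕ → A)) ∧
    (μ : Measure (ℕ → A)) X = 1}

/-- measure of a word: `μ([I] ∩ X)` -/
def mw {A : Type} [MeasurableSpace A] (X : Set (ℕ → A)) (μ : Measure (ℕ → A))
    (I : List A) : ℝ :=
  (μ (cyl I ∩ X)).toReal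

/-- the initial word of length `n` of a sequence -/
def wordOf {A : Type} (x : ℕ → A) (n : ℕ) : List A := List.ofFn (fun i : Fin n => x i)

/-- `n`-block entropy -/
def Hblock {A : Type} [Fintype A] [MeasurableSpace A] (X : Set (ℕ → A))
    (μ : Measure (ℕ → A)) (n : ℕ) : ℝ :=
  -∑ w : Fin n → A, mw X μ (List.ofFn w) * Real.log (mw X μ (List.ofFn w))

/-- measure-theoretic entropy (the limit exists for invariant measures; `liminf` realizes it) -/
def ent {A : Type} [Fintype A] [MeasurableSpace A] (X : Set (ℕ → A))
    (μ : Measure (ℕ → A)) : ℝ :=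
  liminf (fun n : ℕ => Hblock X μ n / n) atTop

/-- extended logarithm: `log t`, with value `⊥` for `t ≤ 0` -/
def elog (t : ℝ) : EReal := if t ≤ 0 then ⊥ else ((Real.log t : ℝ) : EReal)

/-- the integral `∫ log g dμ`, valued in `ℝ ∪ {−∞}` -/
def intlog {Ω : Type*} [MeasurableSpace Ω] (μ : Measure Ω) (g : Ω → ℝ) : EReal :=
  ((∫⁻ x, ENNReal.ofReal (Real.log (g x)) ∂μ : ℝ≥0∞) : EReal) -
    ((∫⁻ x, (if g x ≤ 0 then (⊤ : ℝ≥0∞) else ENNReal.ofReal (-Real.log (g x))) ∂μ : ℝ≥0∞) : EReal)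

/-- sub-additive potential `Φ = (log φ_n)_{n ≥ 1}` -/
def SubaddPot {A : Type} [TopologicalSpace A] (X : Set (ℕ → A))
    (φ : ℕ → (ℕ → A) → ℝ) : Prop :=
  (∀ n, 1 ≤ n → ContinuousOn (φ n) X) ∧
  (∀ n, 1 ≤ n → ∀ x ∈ X, 0 ≤ φ n x) ∧
  ∃ c > (0:ℝ), ∀ n m : ℕ, 1 ≤ n → 1 ≤ m → ∀ x ∈ X,
    φ (n + m) x ≤ c * φ n x * φ m (shiftMap^[n] x)

/-- `Φ_*(μ) = lim (1/n) ∫ log φ_n dμ` (realized as a `liminf` in `EReal`) -/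
def PhiStar {A : Type} [MeasurableSpace A] (μ : Measure (ℕ → A))
    (φ : ℕ → (ℕ → A) → ℝ) : EReal :=
  liminf (fun n : ℕ => (((n : ℝ)⁻¹ : ℝ) : EReal) * intlog μ (φ n)) atTop

/-- sub-multiplicative function on the language of `X` -/
def Submult {A : Type} (X : Set (ℕ → A)) (φ : List A → ℝ) : Prop :=
  (∀ I, Lang X I → 0 ≤ φ I) ∧ φ [] = 1 ∧
  ∃ c > (0:ℝ), ∀ I J : List A, Lang X (I ++ J) → φ (I ++ J) ≤ c⁻¹ * φ I * φ J

/-- the potential generated by a word function -/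
def genPot {A : Type} (φ : List A → ℝ) : ℕ → (ℕ → A) → ℝ := fun n x => φ (wordOf x n)

/-- the scaled potential `cΦ = (log φ_n^c)` -/
def scPot {Ω : Type*} (c : ℝ) (φ : ℕ → Ω → ℝ) : ℕ → Ω → ℝ := fun n x => φ n x ^ c

/-- the "pressure value" `Φ_*(μ) + h_μ` -/
def eqVal {A : Type} [Fintype A] [MeasurableSpace A] (X : Set (ℕ → A))
    (φ : ℕ → (ℕ → A) → ℝ) (μ : ProbabilityMeasure (ℕ → A)) : EReal :=
  PhiStar (μ : Measure (ℕ → A)) φ + ((ent X (μ : Measure (ℕ → A)) : ℝ) : EReal)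

/-- the set of equilibrium states of `Φ` -/
def EqSet {A : Type} [Fintype A] [MeasurableSpace A] (X : Set (ℕ → A))
    (φ : ℕ → (ℕ → A) → ℝ) : Set (ProbabilityMeasure (ℕ → A)) :=
  {μ | μ ∈ MInv X ∧ eqVal X φ μ = ⨆ η ∈ MInv X, eqVal X φ η}

/-- sequence map induced by a one-block map -/
def blockMap {A B : Type} (π : A → B) : (ℕ → A) → (ℕ → B) := fun x n => π (x n)

/-- pushforward of a probability measure under a one-block map -/
def pushM {A B : Type} [MeasurableSpace A] [MeasurableSpace B] (π : A → B)
    (μ : ProbabilityMeasure (ℕ → A)) : Measure (ℕ → B) :=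
  (μ : Measure (ℕ → A)).map (blockMap π)

/-- conditional equilibrium states of `Φ` over `ν` -/
def CondEqSet {A B : Type} [Fintype A] [MeasurableSpace A] [MeasurableSpace B]
    (X : Set (ℕ → A)) (π : A → B) (φ : ℕ → (ℕ → A) → ℝ) (ν : Measure (ℕ → B)) :
    Set (ProbabilityMeasure (ℕ → A)) :=
  {μ | μ ∈ MInv X ∧ pushM π μ = ν ∧
    eqVal X φ μ = ⨆ η ∈ {η | η ∈ MInv X ∧ pushM π η = ν}, eqVal X φ η}

/-- the projected word function `ψ(J) = Σ_{I : πI = J} φ(I)` -/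
def psiProj {A B : Type} [Fintype A] (X : Set (ℕ → A)) (π : A → B) (φ : List A → ℝ)
    (J : List B) : ℝ :=
  ∑ w : Fin J.length → A,
    if Lang X (List.ofFn w) ∧ List.map π (List.ofFn w) = J then φ (List.ofFn w) else 0

/-- `φ^{(2)}(J) = (Σ_{I : πI = J} φ(I)^{1/a₁})^{a₁}` -/
def phiTwo {A B : Type} [Fintype A] (X : Set (ℕ → A)) (π : A → B) (φ : List A → ℝ)
    (a₁ : ℝ) (J : List B) : ℝ :=
  (∑ w : Fin J.length → A,
    if Lang X (List.ofFn w) ∧ List.map π (List.ofFn w) = J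
    then φ (List.ofFn w) ^ a₁⁻¹ else 0) ^ a₁

/-- `a`-weighted pressure value for `k = 2` -/
def wVal2 {A B : Type} [Fintype A] [Fintype B] [MeasurableSpace A] [MeasurableSpace B]
    (X : Set (ℕ → A)) (Y : Set (ℕ → B)) (π : A → B) (φ : ℕ → (ℕ → A) → ℝ)
    (a₁ a₂ : ℝ) (μ : ProbabilityMeasure (ℕ → A)) : EReal :=
  PhiStar (μ : Measure (ℕ → A)) φ +
    ((a₁ * ent X (μ : Measure (ℕ → A)) + a₂ * ent Y (pushM π μ) : ℝ) : EReal)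

/-- the set of `a`-weighted equilibrium states, `k = 2` -/
def WEqSet2 {A B : Type} [Fintype A] [Fintype B] [MeasurableSpace A] [MeasurableSpace B]
    (X : Set (ℕ → A)) (Y : Set (ℕ → B)) (π : A → B) (φ : ℕ → (ℕ → A) → ℝ)
    (a₁ a₂ : ℝ) : Set (ProbabilityMeasure (ℕ → A)) :=
  {μ | μ ∈ MInv X ∧ wVal2 X Y π φ a₁ a₂ μ = ⨆ η ∈ MInv X, wVal2 X Y π φ a₁ a₂ η}

/-- convexity of a set of probability measures -/
def ConvexPM {Ω : Type*} [MeasurableSpace Ω] (S : Set (ProbabilityMeasure Ω)) : Prop :=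
  ∀ μ₁ ∈ S, ∀ μ₂ ∈ S, ∀ t : ℝ, 0 ≤ t → t ≤ 1 → ∀ μ : ProbabilityMeasure Ω,
    (μ : Measure Ω) = ENNReal.ofReal t • (μ₁ : Measure Ω) +
      ENNReal.ofReal (1 - t) • (μ₂ : Measure Ω) → μ ∈ S

/-- extreme points of a set of probability measures -/
def IsExtremePM {Ω : Type*} [MeasurableSpace Ω] (S : Set (ProbabilityMeasure Ω))
    (μ : ProbabilityMeasure Ω) : Prop :=
  μ ∈ S ∧ ∀ μ₁ ∈ S, ∀ μ₂ ∈ S, ∀ t : ℝ, 0 < t → t < 1 →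
    (μ : Measure Ω) = ENNReal.ofReal t • (μ₁ : Measure Ω) +
      ENNReal.ofReal (1 - t) • (μ₂ : Measure Ω) → μ₁ = μ₂

/-- the class `Ω_w(A*, p)` -/
def OmegaW {A : Type} [Fintype A] (p : ℕ) (f : List A → ℝ) : Prop :=
  (∀ I, 0 ≤ f I ∧ f I ≤ 1) ∧
  ∃ c > (0:ℝ),
    (∀ n : ℕ, ∑ w : Fin n → A, f (List.ofFn w) = 1) ∧
    (∀ I J : List A, ∃ K : List A, K.length ≤ p ∧ c * (f I * f J) ≤ f (I ++ K ++ J)) ∧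
    (∀ I : List A, ∃ i j : A, c * f I ≤ f (i :: I) ∧ c * f I ≤ f (I ++ [j]))

/-- the class `Ω(A*, p)` -/
def OmegaS {A : Type} [Fintype A] (p : ℕ) (f : List A → ℝ) : Prop :=
  (∀ I, 0 ≤ f I ∧ f I ≤ 1) ∧
  ∃ c > (0:ℝ),
    (∀ n : ℕ, ∑ w : Fin n → A, f (List.ofFn w) = 1) ∧
    (∀ I J : List A, ∃ K : List A, K.length = p ∧ c * (f I * f J) ≤ f (I ++ K ++ J))

/-- `f_{m,n}(I)` -/
def fmn {A : Type} [Fintype A] (f : List A → ℝ) (m n : ℕ) (I : List A) : ℝ :=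
  ∑ u : Fin m → A, ∑ v : Fin n → A, f (List.ofFn u ++ I ++ List.ofFn v)

/-- `f*(I) = sup_{m,n} f_{m,n}(I)` -/
def fstar {A : Type} [Fintype A] (f : List A → ℝ) (I : List A) : ℝ :=
  ⨆ m : ℕ, ⨆ n : ℕ, fmn f m n I

/-- the class `D_w(X, p)` -/
def Dw {A : Type} (X : Set (ℕ → A)) (p : ℕ) (φ : List A → ℝ) : Prop :=
  (∀ I, Lang X I → 0 ≤ φ I) ∧ (∃ I, Lang X I ∧ I ≠ [] ∧ 0 < φ I) ∧
  ∃ c : ℝ, 0 < c ∧ c ≤ 1 ∧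
    (∀ I J : List A, Lang X (I ++ J) → φ (I ++ J) ≤ c⁻¹ * φ I * φ J) ∧
    (∀ I J : List A, Lang X I → Lang X J →
      ∃ K : List A, K.length ≤ p ∧ Lang X (I ++ K ++ J) ∧
        c * (φ I * φ J) ≤ φ (I ++ K ++ J))

/-- the class `D(X, p)` -/
def Ds {A : Type} (X : Set (ℕ → A)) (p : ℕ) (φ : List A → ℝ) : Prop :=
  (∀ I, Lang X I → 0 ≤ φ I) ∧ (∃ I, Lang X I ∧ I ≠ [] ∧ 0 < φ I) ∧
  ∃ c : ℝ, 0 < c ∧ c ≤ 1 ∧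
    (∀ I J : List A, Lang X (I ++ J) → φ (I ++ J) ≤ c⁻¹ * φ I * φ J) ∧
    (∀ I J : List A, Lang X I → Lang X J →
      ∃ K : List A, K.length = p ∧ Lang X (I ++ K ++ J) ∧
        c * (φ I * φ J) ≤ φ (I ++ K ++ J))

end

noncomputable section

/-- iterated one-block maps along a chain of alphabets: `tauFrom π j i : B j → B (j+i)` -/
def tauFrom {B : ℕ → Type} (π : ∀ i, B i → B (i+1)) (j : ℕ) : (i : ℕ) → B j → B (j + i)
  | 0 => id
  | (i+1) => fun a => π (j + i) (tauFrom π j i a)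

/-- weighted pressure value along a chain starting at index `j`, with `k` weights `w 0, …, w (k-1)` -/
def wValGen {B : ℕ → Type} [∀ i, Fintype (B i)] [∀ i, MeasurableSpace (B i)]
    (π : ∀ i, B i → B (i+1)) (X : ∀ i, Set (ℕ → B i)) (j k : ℕ) (w : ℕ → ℝ)
    (φ : ℕ → (ℕ → B j) → ℝ) (μ : ProbabilityMeasure (ℕ → B j)) : EReal :=
  PhiStar (μ : Measure (ℕ → B j)) φ +
    ((∑ i ∈ Finset.range k, w i *
      ent (X (j + i)) ((μ : Measure (ℕ → B j)).map (blockMap (tauFrom π j i))) : ℝ) : EReal)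

/-- weighted equilibrium states along a chain -/
def wEqSetGen {B : ℕ → Type} [∀ i, Fintype (B i)] [∀ i, MeasurableSpace (B i)]
    (π : ∀ i, B i → B (i+1)) (X : ∀ i, Set (ℕ → B i)) (j k : ℕ) (w : ℕ → ℝ)
    (φ : ℕ → (ℕ → B j) → ℝ) : Set (ProbabilityMeasure (ℕ → B j)) :=
  {μ | μ ∈ MInv (X j) ∧
    wValGen π X j k w φ μ = ⨆ η ∈ MInv (X j), wValGen π X j k w φ η}

end


namespace WES

/-- log-sum (Gibbs) inequality -/
lemma gibbs {ι : Type*} [Fintype ι] (a Q : ι → ℝ) (u : ℝ) (hu : 0 < u) (ha : ∀ i, 0 ≤ a i)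
    (hau : ∑ i, a i = u) (hQ : ∀ i, 0 ≤ Q i) (hQ1 : ∑ i, Q i ≤ 1)
    (hpos : ∀ i, 0 < a i → 0 < Q i) :
    u * Real.log u ≤ ∑ i, a i * (Real.log (a i) - Real.log (Q i)) := by
  have key : ∀ i, a i * (Real.log u + Real.log (Q i) - Real.log (a i)) ≤ u * Q i - a i := by
    intro i
    rcases (ha i).lt_or_eq with h | h
    · have hq := hpos i h
      have h1 : Real.log u + Real.log (Q i) - Real.log (a i) = Real.log (u * Q i / a i) := by
        rw [Real.log_div (by positivity) h.ne', Real.log_mul hu.ne' hq.ne']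
      have h2 := Real.log_le_sub_one_of_pos (show 0 < u * Q i / a i by positivity)
      rw [h1]
      calc a i * Real.log (u * Q i / a i) ≤ a i * (u * Q i / a i - 1) := by gcongr
        _ = u * Q i - a i := by field_simp
    · rw [← h]; have := mul_nonneg hu.le (hQ i); simpa using this
  have h := Finset.sum_le_sum (fun i (_ : i ∈ Finset.univ) => key i)
  have e1 : ∑ i, a i * (Real.log u + Real.log (Q i) - Real.log (a i))
      = u * Real.log u - ∑ i, a i * (Real.log (a i) - Real.log (Q i)) := by
    rw [← hau, Finset.sum_mul, ← Finset.sum_sub_distrib]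
    exact Finset.sum_congr rfl fun i _ => by ring
  have e2 : ∑ i, (u * Q i - a i) = u * ∑ i, Q i - u := by
    rw [Finset.sum_sub_distrib, ← Finset.mul_sum, hau]
  rw [e1, e2] at h
  nlinarith [mul_le_mul_of_nonneg_left hQ1 hu.le]

/-- splitting sums over words -/
lemma sum_split {A : Type} [Fintype A] (a b : ℕ) (g : List A → ℝ) :
    ∑ w : Fin (a + b) → A, g (List.ofFn w)
      = ∑ u : Fin a → A, ∑ v : Fin b → A, g (List.ofFn u ++ List.ofFn v) := by
  rw [← Fintype.sum_prod_type', ← (Fin.appendEquiv a b).sum_comp]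
  refine Finset.sum_congr rfl fun x _ => ?_
  rw [← List.ofFn_fin_append]; rfl

/-- block product -/
noncomputable def R {A : Type} (p : List A → ℝ) (d : ℝ) (m : ℕ) (l : List A) : ℝ :=
  if _h : l.length < m ∨ m = 0 then (d⁻¹) ^ l.length else p (l.take m) * R p d m (l.drop m)
termination_by l.length
decreasing_by simp only [List.length_drop]; omega

/-- block sum -/
noncomputable def S {A : Type} (G : List A → ℝ) (m : ℕ) (l : List A) : ℝ :=
  if _h : l.length < m ∨ m = 0 then 0 else G (l.take m) + S G m (l.drop m)
termination_by l.length
decreasing_by simp only [List.length_drop]; omega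

lemma R_short {A : Type} (p : List A → ℝ) (d : ℝ) (m : ℕ) (l : List A) (h : l.length < m) :
    R p d m l = (d⁻¹) ^ l.length := by
  rw [R, dif_pos (Or.inl h)]

lemma R_long {A : Type} (p : List A → ℝ) (d : ℝ) (m : ℕ) (hm : 0 < m) (l : List A)
    (h : m ≤ l.length) : R p d m l = p (l.take m) * R p d m (l.drop m) := by
  rw [R, dif_neg (by omega)]

lemma S_short {A : Type} (p : List A → ℝ) (m : ℕ) (l : List A) (h : l.length < m) :
    S p m l = 0 := by
  rw [S, dif_pos (Or.inl h)]

lemma S_long {A : Type} (p : List A → ℝ) (m : ℕ) (hm : 0 < m) (l : List A)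
    (h : m ≤ l.length) : S p m l = p (l.take m) + S p m (l.drop m) := by
  rw [S, dif_neg (by omega)]

lemma R_nonneg {A : Type} (p : List A → ℝ) (hp : ∀ l, 0 ≤ p l) (d : ℝ) (hd : 0 < d) (m : ℕ)
    (hm : 0 < m) (n : ℕ) : ∀ l : List A, l.length = n → 0 ≤ R p d m l := by
  induction n using Nat.strong_induction_on with
  | _ n ih =>
    intro l hl
    rcases lt_or_ge l.length m with h | h
    · rw [R_short _ _ _ _ h]; positivity
    · rw [R_long _ _ _ hm _ h]
      exact mul_nonneg (hp _) (ih (n - m) (by omega) _ (by simp; omega))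

lemma R_sum {A : Type} [Fintype A] (p : List A → ℝ) (hp : ∀ l, 0 ≤ p l) (m : ℕ)
    (hm : 0 < m) (hA : 0 < Fintype.card A) (hp1 : ∑ v : Fin m → A, p (List.ofFn v) ≤ 1) (n : ℕ) :
    ∑ w : Fin n → A, R p (Fintype.card A) m (List.ofFn w) ≤ 1 := by
  have hd : (0 : ℝ) < Fintype.card A := by exact_mod_cast hA
  induction n using Nat.strong_induction_on with
  | _ n ih =>
    rcases lt_or_ge n m with h | h
    · have : ∀ w : Fin n → A, R p (Fintype.card A) m (List.ofFn w)
          = ((Fintype.card A : ℝ)⁻¹) ^ n := by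
        intro w; rw [R_short _ _ _ _ (by simpa using h)]; simp
      simp only [this]
      simp
      rw [mul_inv_cancel₀ (by positivity)]
    · obtain ⟨k, rfl⟩ := Nat.exists_eq_add_of_le h
      rw [sum_split]
      have : ∀ (u : Fin m → A) (v : Fin k → A), R p (Fintype.card A) m (List.ofFn u ++ List.ofFn v)
          = p (List.ofFn u) * R p (Fintype.card A) m (List.ofFn v) := by
        intro u v
        rw [R_long _ _ _ hm _ (by simp)]
        rw [List.take_left' (by simp), List.drop_left' (by simp)]
      simp only [this]
      rw [← Finset.sum_mul_sum]
      have h1 := ih k (by omega)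
      have h2 : 0 ≤ ∑ w : Fin k → A, R p (Fintype.card A) m (List.ofFn w) :=
        Finset.sum_nonneg fun w _ => R_nonneg p hp _ hd m hm _ _ rfl
      exact mul_le_one₀ hp1 h2 h1

lemma R_pos {A : Type} (p : List A → ℝ) (d : ℝ) (hd : 0 < d) (m : ℕ)
    (hm : 0 < m) (n : ℕ) : ∀ l : List A, l.length = n →
      (∀ i, i + m ≤ l.length → 0 < p ((l.drop i).take m)) → 0 < R p d m l := by
  induction n using Nat.strong_induction_on with
  | _ n ih =>
    intro l hl hpos
    rcases lt_or_ge l.length m with h | h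
    · rw [R_short _ _ _ _ h]; positivity
    · rw [R_long _ _ _ hm _ h]
      refine mul_pos (by simpa using hpos 0 (by omega)) (ih (n - m) (by omega) _ (by simp; omega) ?_)
      intro i hi
      rw [List.drop_drop]
      simp only [List.length_drop] at hi
      exact hpos _ (by omega)

lemma T_sum {A : Type} (G : List A → ℝ) (m' : ℕ) (l : List A) :
    ∑ j ∈ Finset.range (m' + 1), S G (m' + 1) (l.drop j)
      = ∑ i ∈ Finset.range (l.length + 1 - (m' + 1)), G ((l.drop i).take (m' + 1)) := by
  induction l with
  | nil => 
    have : S G (m' + 1) ([] : List A) = 0 := S_short _ _ _ (by simp)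
    simp [this]
  | cons a t ih =>
    rcases lt_or_ge (a :: t).length (m' + 1) with h | h
    · have : ∀ j, S G (m' + 1) ((a :: t).drop j) = 0 :=
        fun j => S_short _ _ _ (by simp only [List.length_drop]; omega)
      have h0 : (a :: t).length + 1 - (m' + 1) = 0 := by omega
      rw [h0]
      simp [this]
    · rw [Finset.sum_range_succ']
      have e : (a :: t).length + 1 - (m' + 1) = (t.length + 1 - (m' + 1)) + 1 := by
        simp only [List.length_cons] at h ⊢; omega
      rw [e, Finset.sum_range_succ', List.drop_zero, S_long _ _ (by omega) _ h]
      simp only [List.drop_succ_cons, List.drop_zero]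
      rw [← ih, Finset.sum_range_succ]
      ring

end WES

set_option linter.unusedSectionVars false

namespace WES

section words
variable {A : Type}

lemma shift_iter (a : ℕ) (x : ℕ → A) (n : ℕ) : shiftMap^[a] x n = x (n + a) := by
  induction a generalizing x with
  | zero => rfl
  | succ a ih => rw [Function.iterate_succ_apply, ih]; rfl

lemma wordOf_length (x : ℕ → A) (n : ℕ) : (wordOf x n).length = n := by simp [wordOf]

lemma wordOf_get (x : ℕ → A) (n i : ℕ) (h : i < (wordOf x n).length) :
    (wordOf x n)[i] = x i := by simp [wordOf]

lemma wordOf_add (x : ℕ → A) (a b : ℕ) :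
    wordOf x (a + b) = wordOf x a ++ wordOf (shiftMap^[a] x) b := by
  apply List.ext_getElem
  · simp [wordOf_length]
  · intro i h1 h2
    rw [wordOf_get, List.getElem_append]
    split_ifs with h
    · rw [wordOf_get]
    · rw [wordOf_get, shift_iter]
      rw [wordOf_length] at h ⊢
      congr 1; omega

lemma wordOf_take (x : ℕ → A) (a b : ℕ) : (wordOf x (a + b)).take a = wordOf x a := by
  rw [wordOf_add, List.take_left' (wordOf_length _ _)]

lemma wordOf_drop (x : ℕ → A) (a b : ℕ) :
    (wordOf x (a + b)).drop a = wordOf (shiftMap^[a] x) b := by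
  rw [wordOf_add, List.drop_left' (wordOf_length _ _)]

lemma wordOf_drop_take (x : ℕ → A) (n i m : ℕ) (h : i + m ≤ n) :
    ((wordOf x n).drop i).take m = wordOf (shiftMap^[i] x) m := by
  obtain ⟨k, rfl⟩ := Nat.exists_eq_add_of_le h
  rw [add_assoc, wordOf_drop, wordOf_take]

lemma mem_cyl_iff (x : ℕ → A) (l : List A) : x ∈ cyl l ↔ wordOf x l.length = l := by
  constructor
  · intro h
    apply List.ext_getElem
    · simp [wordOf_length]
    · intro i h1 h2
      rw [wordOf_get]
      exact h ⟨i, h2⟩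
  · intro h i
    have := wordOf_get x l.length i (by rw [wordOf_length]; exact i.2)
    rw [← this]
    simp [h]

lemma mem_cyl_ofFn (x : ℕ → A) {n : ℕ} (w : Fin n → A) :
    x ∈ cyl (List.ofFn w) ↔ (fun i : Fin n => x i) = w := by
  rw [mem_cyl_iff, List.length_ofFn, wordOf]
  exact List.ofFn_injective.eq_iff

lemma mem_cyl_wordOf (x : ℕ → A) (n : ℕ) : x ∈ cyl (wordOf x n) := by
  rw [mem_cyl_iff, wordOf_length]

lemma shift_mem [TopologicalSpace A] {X : Set (ℕ → A)} (hX : IsSubshift X) {x : ℕ → A} (hx : x ∈ X)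
    (n : ℕ) : shiftMap^[n] x ∈ X := by
  induction n with
  | zero => exact hx
  | succ n ih =>
    rw [Function.iterate_succ_apply']
    exact hX.2.2 ⟨_, ih, rfl⟩

lemma lang_wordOf {X : Set (ℕ → A)} {x : ℕ → A} (hx : x ∈ X) (n : ℕ) : Lang X (wordOf x n) :=
  ⟨x, mem_cyl_wordOf x n, hx⟩

lemma lang_exists {X : Set (ℕ → A)} {l : List A} (h : Lang X l) :
    ∃ x ∈ X, wordOf x l.length = l := by
  obtain ⟨x, h1, h2⟩ := h
  exact ⟨x, h2, (mem_cyl_iff x l).1 h1⟩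

end words

section meas
variable {A : Type} [Fintype A] [TopologicalSpace A]
    [DiscreteTopology A] [MeasurableSpace A] [BorelSpace A]

lemma meas_r (n : ℕ) : Measurable (fun (x : ℕ → A) (i : Fin n) => x i) := by fun_prop

lemma cyl_pre {n : ℕ} (w : Fin n → A) :
    cyl (List.ofFn w) = (fun (x : ℕ → A) (i : Fin n) => x i) ⁻¹' {w} := by
  ext x; rw [mem_cyl_ofFn]; rfl

lemma meas_shift : Measurable (shiftMap : (ℕ → A) → (ℕ → A)) := by
  unfold shiftMap; fun_prop

lemma cont_shift : Continuous (shiftMap : (ℕ → A) → (ℕ → A)) := by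
  unfold shiftMap; fun_prop

lemma meas_cyl (l : List A) : MeasurableSet (cyl l) := by
  have : cyl l = cyl (List.ofFn l.get) := by simp
  rw [this, cyl_pre]
  exact meas_r _ (measurableSet_singleton _)

lemma lint_words (μ : Measure (ℕ → A)) (m : ℕ) (g : List A → ℝ≥0∞) :
    ∫⁻ x, g (wordOf x m) ∂μ = ∑ v : Fin m → A, g (List.ofFn v) * μ (cyl (List.ofFn v)) := by
  have h := lintegral_map (μ := μ) (f := fun v : Fin m → A => g (List.ofFn v))
    (measurable_of_finite _) (meas_r (A := A) m)
  rw [lintegral_fintype] at h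
  unfold wordOf
  rw [← h]
  refine Finset.sum_congr rfl fun v _ => ?_
  rw [Measure.map_apply (meas_r m) (measurableSet_singleton _), cyl_pre]

lemma int_words (μ : Measure (ℕ → A)) [IsFiniteMeasure μ] (m : ℕ) (g : List A → ℝ) :
    ∫ x, g (wordOf x m) ∂μ = ∑ v : Fin m → A, μ.real (cyl (List.ofFn v)) * g (List.ofFn v) := by
  have h := integral_map (μ := μ) (f := fun v : Fin m → A => g (List.ofFn v))
    (meas_r (A := A) m).aemeasurable (measurable_of_finite _).aestronglyMeasurable
  rw [integral_fintype .of_finite] at h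
  unfold wordOf
  rw [← h]
  refine Finset.sum_congr rfl fun v _ => ?_
  rw [measureReal_def, measureReal_def, Measure.map_apply (meas_r m) (measurableSet_singleton _),
    cyl_pre]
  rfl

lemma sum_one (μ : Measure (ℕ → A)) [IsProbabilityMeasure μ] (m : ℕ) :
    ∑ v : Fin m → A, μ.real (cyl (List.ofFn v)) = 1 := by
  have := int_words μ m (fun _ => 1)
  simpa using this.symm

lemma mw_eq (μ : Measure (ℕ → A)) [IsProbabilityMeasure μ] {X : Set (ℕ → A)} (hX : MeasurableSet X)
    (h1 : μ X = 1) (l : List A) : mw X μ l = μ.real (cyl l) := by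
  have h0 : μ Xᶜ = 0 := by rw [prob_compl_eq_zero_iff hX]; exact h1
  unfold mw
  rw [measureReal_def, measure_inter_conull h0]

lemma lang_of_pos (μ : Measure (ℕ → A)) [IsProbabilityMeasure μ] {X : Set (ℕ → A)}
    (hX : MeasurableSet X)
    (h1 : μ X = 1) (l : List A) (h : 0 < μ.real (cyl l)) : Lang X l := by
  rw [← mw_eq μ hX h1] at h
  unfold mw at h
  by_contra hc
  rw [Lang, Set.not_nonempty_iff_eq_empty] at hc
  simp [hc] at h

lemma int_shift (μ : Measure (ℕ → A)) [IsProbabilityMeasure μ] (hμ : μ.map shiftMap = μ)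
    (k m : ℕ) (g : List A → ℝ) :
    ∫ x, g (wordOf (shiftMap^[k] x) m) ∂μ = ∫ x, g (wordOf x m) ∂μ := by
  have mp : MeasurePreserving (shiftMap : (ℕ → A) → (ℕ → A)) μ μ := ⟨meas_shift, hμ⟩
  have mpk := mp.iterate k
  have hm : Measurable (fun x : ℕ → A => g (wordOf x m)) := by
    unfold wordOf
    exact (measurable_of_finite (fun v : Fin m → A => g (List.ofFn v))).comp (meas_r m)
  conv_rhs => rw [← mpk.map_eq]
  rw [integral_map mpk.measurable.aemeasurable hm.aestronglyMeasurable]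

lemma real_shift (μ : Measure (ℕ → A)) [IsProbabilityMeasure μ] (hμ : μ.map shiftMap = μ)
    (k : ℕ) (s : Set (ℕ → A)) (hs : MeasurableSet s) :
    μ.real (shiftMap^[k] ⁻¹' s) = μ.real s := by
  have mp : MeasurePreserving (shiftMap : (ℕ → A) → (ℕ → A)) μ μ := ⟨meas_shift, hμ⟩
  rw [measureReal_def, (mp.iterate k).measure_preimage hs.nullMeasurableSet, measureReal_def]

lemma Hblock_eq (μ : Measure (ℕ → A)) [IsProbabilityMeasure μ] {X : Set (ℕ → A)}
    (hX : MeasurableSet X) (h1 : μ X = 1) (n : ℕ) :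
    Hblock X μ n = -∑ v : Fin n → A,
      μ.real (cyl (List.ofFn v)) * Real.log (μ.real (cyl (List.ofFn v))) := by
  unfold Hblock
  simp only [mw_eq μ hX h1]

lemma Hblock_subadd (μ : Measure (ℕ → A)) [IsProbabilityMeasure μ] {X : Set (ℕ → A)}
    (hX : MeasurableSet X) (h1 : μ X = 1) (hμ : μ.map shiftMap = μ) : Subadditive (Hblock X μ) := by
  intro m n
  rw [Hblock_eq μ hX h1, Hblock_eq μ hX h1, Hblock_eq μ hX h1]
  set M : List A → ℝ := fun l => μ.real (cyl l) with hM
  have hcy1 : ∀ l : List A, l.length = m + n → M l ≤ M (l.take m) := by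
    intro l hl
    refine measureReal_mono ?_
    intro x hx
    rw [mem_cyl_iff] at hx ⊢
    rw [hl] at hx
    rw [← hx, wordOf_take, wordOf_length]
  have hcy2 : ∀ l : List A, l.length = m + n → M l ≤ M (l.drop m) := by
    intro l hl
    simp only [hM]
    rw [← real_shift μ hμ m _ (meas_cyl (l.drop m))]
    refine measureReal_mono ?_
    intro x hx
    rw [Set.mem_preimage, mem_cyl_iff]
    rw [mem_cyl_iff] at hx
    rw [hl] at hx
    rw [← hx, wordOf_drop, wordOf_length]
  have hg := gibbs (fun w : Fin (m + n) → A => M (List.ofFn w))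
    (fun w => M ((List.ofFn w).take m) * M ((List.ofFn w).drop m)) 1 one_pos
    (fun _ => measureReal_nonneg) (sum_one μ _)
    (fun _ => mul_nonneg measureReal_nonneg measureReal_nonneg)
    (by
      rw [sum_split m n (fun l => M (l.take m) * M (l.drop m))]
      have : ∀ (u : Fin m → A) (v : Fin n → A),
        M ((List.ofFn u ++ List.ofFn v).take m) * M ((List.ofFn u ++ List.ofFn v).drop m)
          = M (List.ofFn u) * M (List.ofFn v) := by
        intro u v
        rw [List.take_left' (by simp), List.drop_left' (by simp)]
      simp only [this]
      rw [← Finset.sum_mul_sum]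
      simp only [hM, sum_one]
      norm_num)
    (fun w hw => mul_pos (hw.trans_le (hcy1 _ (by simp))) (hw.trans_le (hcy2 _ (by simp))))
  have e1 : ∑ v : Fin m → A, M (List.ofFn v) * Real.log (M (List.ofFn v))
      = ∑ w : Fin (m + n) → A, M (List.ofFn w) * Real.log (M ((List.ofFn w).take m)) := by
    rw [← int_words μ m (fun l => Real.log (M l)),
      ← int_words μ (m + n) (fun l => Real.log (M (l.take m)))]
    simp only [wordOf_take]
  have e2 : ∑ v : Fin n → A, M (List.ofFn v) * Real.log (M (List.ofFn v))
      = ∑ w : Fin (m + n) → A, M (List.ofFn w) * Real.log (M ((List.ofFn w).drop m)) := by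
    rw [← int_words μ n (fun l => Real.log (M l)),
      ← int_words μ (m + n) (fun l => Real.log (M (l.drop m)))]
    simp only [wordOf_drop]
    exact (int_shift μ hμ m n (fun l => Real.log (M l))).symm
  have e3 : ∑ w : Fin (m + n) → A, M (List.ofFn w) * (Real.log (M (List.ofFn w)) -
      Real.log (M ((List.ofFn w).take m) * M ((List.ofFn w).drop m)))
      = ∑ w : Fin (m + n) → A, M (List.ofFn w) * Real.log (M (List.ofFn w))
       - ∑ w : Fin (m + n) → A, M (List.ofFn w) * Real.log (M ((List.ofFn w).take m))
       - ∑ w : Fin (m + n) → A, M (List.ofFn w) * Real.log (M ((List.ofFn w).drop m)) := by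
    rw [← Finset.sum_sub_distrib, ← Finset.sum_sub_distrib]
    refine Finset.sum_congr rfl fun w _ => ?_
    rcases (measureReal_nonneg : 0 ≤ μ.real (cyl (List.ofFn w))).lt_or_eq with h | h
    · rw [Real.log_mul (h.trans_le (hcy1 _ (by simp))).ne' (h.trans_le (hcy2 _ (by simp))).ne']
      ring
    · have : M (List.ofFn w) = 0 := h.symm
      rw [this]; simp
  rw [e3, ← e1, ← e2] at hg
  simp only [Real.log_one, mul_zero] at hg
  simp only [hM] at hg
  linarith

lemma Hblock_tendsto (μ : Measure (ℕ → A)) [IsProbabilityMeasure μ] {X : Set (ℕ → A)}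
    (hX : MeasurableSet X) (h1 : μ X = 1) (hμ : μ.map shiftMap = μ) :
    Tendsto (fun n : ℕ => Hblock X μ n / n) atTop (𝓝 (ent X μ)) := by
  have h := (Hblock_subadd μ hX h1 hμ).tendsto_lim ⟨0, by
    rintro _ ⟨n, rfl⟩
    have : 0 ≤ Hblock X μ n := by
      rw [Hblock_eq μ hX h1, ← Finset.sum_neg_distrib]
      refine Finset.sum_nonneg fun v _ => ?_
      have := Real.mul_log_nonpos (x := μ.real (cyl (List.ofFn v))) measureReal_nonneg
        measureReal_le_one
      linarith
    positivity⟩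
  unfold ent
  rw [h.liminf_eq]
  exact h

lemma intlog_bot (μ : Measure (ℕ → A)) [IsProbabilityMeasure μ] (φ : List A → ℝ) (m : ℕ)
    (v : Fin m → A) (hv : 0 < μ.real (cyl (List.ofFn v))) (h0 : φ (List.ofFn v) ≤ 0) :
    intlog μ (genPot φ m) = ⊥ := by
  unfold intlog genPot
  have : ∫⁻ x, (if φ (wordOf x m) ≤ 0 then (⊤ : ℝ≥0∞)
      else ENNReal.ofReal (-Real.log (φ (wordOf x m)))) ∂μ = ⊤ := by
    rw [lint_words μ m (fun l => if φ l ≤ 0 then (⊤ : ℝ≥0∞) else ENNReal.ofReal (-Real.log (φ l)))]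
    rw [ENNReal.sum_eq_top]
    refine ⟨v, Finset.mem_univ _, ?_⟩
    rw [if_pos h0, ENNReal.top_mul]
    intro h
    rw [measureReal_def, h] at hv
    simp at hv
  rw [this]
  simp

lemma intlog_real (μ : Measure (ℕ → A)) [IsProbabilityMeasure μ] (φ : List A → ℝ) (m : ℕ)
    (h : ∀ v : Fin m → A, 0 < μ.real (cyl (List.ofFn v)) → 0 < φ (List.ofFn v)) :
    intlog μ (genPot φ m) =
      ((∑ v : Fin m → A, μ.real (cyl (List.ofFn v)) * Real.log (φ (List.ofFn v)) : ℝ) : EReal) := by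
  unfold intlog genPot
  rw [lint_words μ m (fun l => if φ l ≤ 0 then (⊤ : ℝ≥0∞) else ENNReal.ofReal (-Real.log (φ l))),
    lint_words μ m (fun l => ENNReal.ofReal (Real.log (φ l)))]
  have e1 : ∑ v : Fin m → A, ENNReal.ofReal (Real.log (φ (List.ofFn v))) * μ (cyl (List.ofFn v))
      = ENNReal.ofReal (∑ v : Fin m → A,
        max (Real.log (φ (List.ofFn v))) 0 * μ.real (cyl (List.ofFn v))) := by
    rw [ENNReal.ofReal_sum_of_nonneg (fun v _ => by positivity)]
    refine Finset.sum_congr rfl fun v _ => ?_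
    rw [ENNReal.ofReal_mul (by positivity), ofReal_measureReal]
    congr 1
    rw [ENNReal.ofReal_max]; simp
  have e2 : ∑ v : Fin m → A, (if φ (List.ofFn v) ≤ 0 then (⊤ : ℝ≥0∞)
        else ENNReal.ofReal (-Real.log (φ (List.ofFn v)))) * μ (cyl (List.ofFn v))
      = ENNReal.ofReal (∑ v : Fin m → A,
        max (-Real.log (φ (List.ofFn v))) 0 * μ.real (cyl (List.ofFn v))) := by
    rw [ENNReal.ofReal_sum_of_nonneg (fun v _ => by positivity)]
    refine Finset.sum_congr rfl fun v _ => ?_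
    rw [ENNReal.ofReal_mul (by positivity), ofReal_measureReal]
    rcases (measureReal_nonneg : 0 ≤ μ.real (cyl (List.ofFn v))).lt_or_eq with h' | h'
    · rw [if_neg (not_le.2 (h v h'))]
      congr 1
      rw [ENNReal.ofReal_max]; simp
    · have : μ (cyl (List.ofFn v)) = 0 := by
        rw [← ofReal_measureReal, ← h']; simp
      rw [this]; simp
  rw [e1, e2, EReal.coe_ennreal_ofReal, EReal.coe_ennreal_ofReal,
    max_eq_left (Finset.sum_nonneg fun v _ => by positivity),
    max_eq_left (Finset.sum_nonneg fun v _ => by positivity), ← EReal.coe_sub,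
    ← Finset.sum_sub_distrib]
  congr 1
  refine Finset.sum_congr rfl fun v _ => ?_
  rw [← sub_mul, mul_comm]
  congr 1
  rcases le_total 0 (Real.log (φ (List.ofFn v))) with h | h
  · rw [max_eq_left h, max_eq_right (by linarith)]; ring
  · rw [max_eq_right h, max_eq_left (by linarith)]; ring

end meas

end WES

namespace WES

section upper
variable {A : Type} [Fintype A] [TopologicalSpace A]
    [DiscreteTopology A] [MeasurableSpace A] [BorelSpace A]

/-- the partition sum -/
noncomputable def U (X : Set (ℕ → A)) (φ : List A → ℝ) (n : ℕ) : ℝ :=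
  ∑ w : Fin n → A, if Lang X (List.ofFn w) then φ (List.ofFn w) else 0

lemma upper_n {X : Set (ℕ → A)} (hXm : MeasurableSet X) (φ : List A → ℝ)
    (h0 : ∀ I, Lang X I → 0 ≤ φ I)
    (μ : Measure (ℕ → A)) [IsProbabilityMeasure μ] (h1 : μ X = 1) (n : ℕ) (hn : 0 < n) :
    (((n : ℝ)⁻¹ : ℝ) : EReal) * intlog μ (genPot φ n) + ((Hblock X μ n / n : ℝ) : EReal)
      ≤ (((n : ℝ)⁻¹ : ℝ) : EReal) * elog (U X φ n) := by
  have hn' : (0 : ℝ) < (n : ℝ)⁻¹ := by positivity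
  by_cases hv : ∃ v : Fin n → A, 0 < μ.real (cyl (List.ofFn v)) ∧ φ (List.ofFn v) ≤ 0
  · obtain ⟨v, hv, hv0⟩ := hv
    rw [intlog_bot μ φ n v hv hv0, EReal.coe_mul_bot_of_pos hn']
    simp
  · push Not at hv
    rw [intlog_real μ φ n hv]
    have ha : ∀ w : Fin n → A, 0 ≤ (if Lang X (List.ofFn w) then φ (List.ofFn w) else 0) := by
      intro w; split_ifs with h
      · exact h0 _ h
      · exact le_rfl
    have hpos : ∀ w : Fin n → A, 0 < μ.real (cyl (List.ofFn w)) →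
        0 < (if Lang X (List.ofFn w) then φ (List.ofFn w) else 0) := by
      intro w hw
      rw [if_pos (lang_of_pos μ hXm h1 _ hw)]
      exact hv w hw
    have hU : 0 < U X φ n := by
      obtain ⟨w, -, hw⟩ := Finset.exists_ne_zero_of_sum_ne_zero
        (show ∑ v : Fin n → A, μ.real (cyl (List.ofFn v)) ≠ 0 by rw [sum_one]; simp)
      have hw' : 0 < μ.real (cyl (List.ofFn w)) := lt_of_le_of_ne measureReal_nonneg hw.symm
      exact Finset.sum_pos' (fun w _ => ha w) ⟨w, Finset.mem_univ _, hpos w hw'⟩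
    have hg := gibbs (fun w : Fin n → A => μ.real (cyl (List.ofFn w)))
      (fun w => (if Lang X (List.ofFn w) then φ (List.ofFn w) else 0) / U X φ n) 1 one_pos
      (fun _ => measureReal_nonneg) (sum_one μ n) (fun w => div_nonneg (ha w) hU.le)
      (by rw [← Finset.sum_div]; exact (div_self hU.ne').le)
      (fun w hw => div_pos (hpos w hw) hU)
    have e : ∑ w : Fin n → A, μ.real (cyl (List.ofFn w)) * (Real.log (μ.real (cyl (List.ofFn w))) -
        Real.log ((if Lang X (List.ofFn w) then φ (List.ofFn w) else 0) / U X φ n))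
        = ∑ w : Fin n → A, μ.real (cyl (List.ofFn w)) * Real.log (μ.real (cyl (List.ofFn w)))
        - ∑ w : Fin n → A, μ.real (cyl (List.ofFn w)) * Real.log (φ (List.ofFn w))
        + (∑ w : Fin n → A, μ.real (cyl (List.ofFn w))) * Real.log (U X φ n) := by
      rw [Finset.sum_mul, ← Finset.sum_sub_distrib, ← Finset.sum_add_distrib]
      refine Finset.sum_congr rfl fun w _ => ?_
      rcases (measureReal_nonneg : 0 ≤ μ.real (cyl (List.ofFn w))).lt_or_eq with h | h
      · rw [if_pos (lang_of_pos μ hXm h1 _ h), Real.log_div (hv w h).ne' hU.ne']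
        ring
      · rw [← h]; simp
    rw [e, sum_one] at hg
    rw [elog, if_neg (not_le.2 hU), Hblock_eq μ hXm h1]
    rw [← EReal.coe_mul, ← EReal.coe_mul, ← EReal.coe_add, EReal.coe_le_coe_iff]
    rw [div_eq_inv_mul, ← mul_add]
    refine mul_le_mul_of_nonneg_left ?_ hn'.le
    simp only [Real.log_one, mul_zero, one_mul] at hg
    linarith

lemma upper {X : Set (ℕ → A)} (hXm : MeasurableSet X) (φ : List A → ℝ)
    (h0 : ∀ I, Lang X I → 0 ≤ φ I)
    (μ : ProbabilityMeasure (ℕ → A)) (hμ : μ ∈ MInv X) :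
    eqVal X (genPot φ) μ ≤
      liminf (fun n : ℕ => (((n : ℝ)⁻¹ : ℝ) : EReal) * elog (U X φ n)) atTop := by
  have ht := Hblock_tendsto (μ : Measure (ℕ → A)) hXm hμ.2 hμ.1
  have ht' : Tendsto (fun n : ℕ => ((Hblock X (μ : Measure (ℕ → A)) n / n : ℝ) : EReal)) atTop
    (𝓝 ((ent X (μ : Measure (ℕ → A)) : ℝ) : EReal)) := (continuous_coe_real_ereal.tendsto _).comp ht
  unfold eqVal PhiStar
  rw [← ht'.liminf_eq]
  refine EReal.le_liminf_add.trans (liminf_le_liminf ?_)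
  filter_upwards [eventually_gt_atTop 0] with n hn
  exact upper_n hXm φ h0 _ hμ.2 n hn

end upper

section comb
variable {A : Type} [Fintype A] [TopologicalSpace A]

lemma lang_take_drop {X : Set (ℕ → A)} (hX : IsSubshift X) {l : List A} (hl : Lang X l) (m : ℕ)
    (hm : m ≤ l.length) : Lang X (l.take m) ∧ Lang X (l.drop m) := by
  obtain ⟨x, hx, h⟩ := lang_exists hl
  obtain ⟨k, hk⟩ := Nat.exists_eq_add_of_le hm
  rw [hk] at h
  rw [← h, wordOf_take, wordOf_drop]
  exact ⟨lang_wordOf hx _, lang_wordOf (shift_mem hX hx _) _⟩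

variable (X : Set (ℕ → A)) (hX : IsSubshift X) (φ : List A → ℝ) (C : ℝ)

lemma log_split (hX : IsSubshift X) (h0 : ∀ I, Lang X I → 0 ≤ φ I) (hC : 0 < C)
    (hsub : ∀ I J, Lang X (I ++ J) → φ (I ++ J) ≤ C * φ I * φ J)
    (l : List A) (hl : Lang X l) (hpos : 0 < φ l) (m : ℕ) (hm : m ≤ l.length) :
    0 < φ (l.take m) ∧ 0 < φ (l.drop m) ∧
      Real.log (φ l) ≤ Real.log C + Real.log (φ (l.take m)) + Real.log (φ (l.drop m)) := by
  obtain ⟨h1, h2⟩ := lang_take_drop hX hl m hm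
  have h3 := hsub (l.take m) (l.drop m) (by rwa [List.take_append_drop])
  rw [List.take_append_drop] at h3
  have h4 := h0 _ h1
  have h5 := h0 _ h2
  have h6 : 0 < φ (l.take m) := by
    rcases h4.lt_or_eq with h | h
    · exact h
    · rw [← h] at h3; simp at h3; linarith
  have h7 : 0 < φ (l.drop m) := by
    rcases h5.lt_or_eq with h | h
    · exact h
    · rw [← h] at h3; simp at h3; linarith
  refine ⟨h6, h7, ?_⟩
  rw [← Real.log_mul hC.ne' h6.ne', ← Real.log_mul (by positivity) h7.ne']
  exact Real.log_le_log hpos h3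

lemma short_bound (m : ℕ) : ∃ B : ℝ, 0 ≤ B ∧ ∀ l : List A, l.length < m → Real.log (φ l) ≤ B := by
  refine ⟨∑ k ∈ Finset.range m, ∑ w : Fin k → A, |Real.log (φ (List.ofFn w))|,
    Finset.sum_nonneg fun _ _ => Finset.sum_nonneg fun _ _ => abs_nonneg _, ?_⟩
  intro l hl
  have h1 : |Real.log (φ l)| ≤ ∑ w : Fin l.length → A, |Real.log (φ (List.ofFn w))| := by
    have := Finset.single_le_sum (f := fun w : Fin l.length → A => |Real.log (φ (List.ofFn w))|)
      (fun _ _ => abs_nonneg _) (Finset.mem_univ l.get)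
    simpa using this
  have h2 := Finset.single_le_sum
    (f := fun k => ∑ w : Fin k → A, |Real.log (φ (List.ofFn w))|)
      (fun _ _ => Finset.sum_nonneg fun _ _ => abs_nonneg _) (Finset.mem_range.2 hl)
  exact (le_abs_self _).trans (h1.trans h2)

lemma RS_bound (hX : IsSubshift X) (h0 : ∀ I, Lang X I → 0 ≤ φ I) (hC : 0 < C)
    (hsub : ∀ I J, Lang X (I ++ J) → φ (I ++ J) ≤ C * φ I * φ J)
    (m : ℕ) (hm : 0 < m) (ε : ℝ) (B : ℝ) (hB : ∀ l : List A, l.length < m → Real.log (φ l) ≤ B)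
    (p : List A → ℝ) (d : ℝ) (hd : 1 ≤ d) (n : ℕ) : ∀ l : List A, l.length = n → Lang X l → 0 < φ l →
    (∀ i, i + m ≤ l.length → 0 < p ((l.drop i).take m)) →
    Real.log (φ l) - Real.log (R p d m l) ≤ B + m * Real.log d +
      S (fun v => Real.log C + Real.log (max (φ v) ε) - Real.log (p v)) m l := by
  have hd0 : 0 ≤ Real.log d := Real.log_nonneg hd
  induction n using Nat.strong_induction_on with
  | _ n ih =>
    intro l hl hL hpos hp
    rcases lt_or_ge l.length m with h | h
    · rw [R_short _ _ _ _ h, S_short _ _ _ h, Real.log_pow, Real.log_inv]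
      have := hB l h
      have h2 : (l.length : ℝ) * Real.log d ≤ m * Real.log d := by
        gcongr
      linarith
    · obtain ⟨h1, h2, h3⟩ := log_split X φ C hX h0 hC hsub l hL hpos m h
      have hp' : ∀ i, i + m ≤ (l.drop m).length → 0 < p (((l.drop m).drop i).take m) := by
        intro i hi
        rw [List.drop_drop]
        simp only [List.length_drop] at hi
        exact hp _ (by omega)
      have h4 := ih (n - m) (by omega) (l.drop m) (by simp; omega)
        (lang_take_drop hX hL m h).2 h2 hp'
      have h5 : 0 < R p d m (l.drop m) := R_pos p d (by linarith) m hm _ _ rfl hp'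
      have h6 : 0 < p (l.take m) := by simpa using hp 0 (by omega)
      rw [R_long _ _ _ hm _ h, S_long _ _ hm _ h, Real.log_mul h6.ne' h5.ne']
      have h7 : Real.log (φ (l.take m)) ≤ Real.log (max (φ (l.take m)) ε) :=
        Real.log_le_log h1 (le_max_left _ _)
      linarith

lemma main_ineq (hX : IsSubshift X) (h0 : ∀ I, Lang X I → 0 ≤ φ I) (hC : 1 ≤ C)
    (hsub : ∀ I J, Lang X (I ++ J) → φ (I ++ J) ≤ C * φ I * φ J)
    (m : ℕ) (hm : 0 < m) (ε : ℝ) (hε : 0 < ε) (hε1 : ε ≤ 1) : ∃ D : ℝ, ∀ n, m ≤ n →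
    ∀ p : List A → ℝ, (∀ l, 0 ≤ p l) → (∀ l, p l ≤ 1) → (∑ v : Fin m → A, p (List.ofFn v) ≤ 1) →
    ∀ xs : (Fin n → A) → (ℕ → A),
    (∀ w, Lang X (List.ofFn w) → wordOf (xs w) n = List.ofFn w) →
    (∀ w, Lang X (List.ofFn w) → 0 < φ (List.ofFn w) →
      ∀ i < n, 0 < p (wordOf (shiftMap^[i] (xs w)) m)) →
    0 < U X φ n →
    m * (U X φ n * Real.log (U X φ n)) ≤ U X φ n * D +
      ∑ w : Fin n → A, (if Lang X (List.ofFn w) then φ (List.ofFn w) else 0) *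
        ∑ i ∈ Finset.range n, (Real.log C + Real.log (max (φ (wordOf (shiftMap^[i] (xs w)) m)) ε)
          - Real.log (p (wordOf (shiftMap^[i] (xs w)) m))) := by
  obtain ⟨B, hB0, hB⟩ := short_bound φ m
  have hA : 0 < Fintype.card A := by
    obtain ⟨x, hx⟩ := hX.1
    exact Fintype.card_pos_iff.2 ⟨x 0⟩
  set d : ℝ := (Fintype.card A : ℝ) with hd
  have hd1 : 1 ≤ d := by rw [hd]; exact_mod_cast hA
  have hd0 : 0 ≤ Real.log d := Real.log_nonneg hd1
  have hCp : 0 < C := by linarith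
  have hCl : 0 ≤ Real.log C := Real.log_nonneg hC
  have hεl : Real.log ε ≤ 0 := Real.log_nonpos hε.le hε1
  set D0 : ℝ := Real.log C + B + m * Real.log d + (B + m * Real.log d) with hD0
  refine ⟨m * D0 + m * (-Real.log ε), ?_⟩
  intro n hn p hp hp1 hps xs hxs hpp hU
  set G : List A → ℝ := fun v => Real.log C + Real.log (max (φ v) ε) - Real.log (p v) with hG
  have hGlow : ∀ v, Real.log ε ≤ G v := by
    intro v
    have h1 : Real.log ε ≤ Real.log (max (φ v) ε) := Real.log_le_log hε (le_max_right _ _)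
    have h2 : Real.log (p v) ≤ 0 := Real.log_nonpos (hp v) (hp1 v)
    simp only [hG]; linarith
  set a : (Fin n → A) → ℝ := fun w => if Lang X (List.ofFn w) then φ (List.ofFn w) else 0 with ha
  have ha0 : ∀ w, 0 ≤ a w := by
    intro w; simp only [ha]; split_ifs with h
    · exact h0 _ h
    · exact le_rfl
  have hapos : ∀ w, 0 < a w → Lang X (List.ofFn w) ∧ 0 < φ (List.ofFn w) ∧ a w = φ (List.ofFn w) := by
    intro w hw
    simp only [ha] at hw ⊢
    split_ifs at hw ⊢ with h
    · exact ⟨h, hw, rfl⟩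
    · exact absurd hw (lt_irrefl _)
  -- positivity of p on subwords
  have hsubw : ∀ w, 0 < a w → ∀ i, i + m ≤ n → 0 < p (((List.ofFn w).drop i).take m) := by
    intro w hw i hi
    obtain ⟨h1, h2, -⟩ := hapos w hw
    rw [← hxs w h1, wordOf_drop_take _ _ _ _ hi]
    exact hpp w h1 h2 i (by omega)
  have hsubj : ∀ w, 0 < a w → ∀ j, ∀ i, i + m ≤ ((List.ofFn w).drop j).length →
      0 < p ((((List.ofFn w).drop j).drop i).take m) := by
    intro w hw j i hi
    rw [List.drop_drop]
    simp only [List.length_drop, List.length_ofFn] at hi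
    exact hsubw w hw _ (by omega)
  -- for each j
  have hj : ∀ j < m, U X φ n * Real.log (U X φ n) ≤
      ∑ w, a w * (D0 + S G m ((List.ofFn w).drop j)) := by
    intro j hj
    have hQs : ∑ w : Fin n → A, (d⁻¹) ^ j * R p d m ((List.ofFn w).drop j) ≤ 1 := by
      obtain ⟨k, rfl⟩ := Nat.exists_eq_add_of_le (show j ≤ n by omega)
      rw [sum_split j k (fun l => (d⁻¹) ^ j * R p d m (l.drop j))]
      have : ∀ (u : Fin j → A) (v : Fin k → A),
          (List.ofFn u ++ List.ofFn v).drop j = List.ofFn v :=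
        fun u v => List.drop_left' (by simp)
      simp only [this]
      rw [Finset.sum_const, ← Finset.mul_sum]
      have h1 := R_sum p hp m hm hA hps k
      simp only [Finset.card_univ, Fintype.card_pi, Finset.prod_const, Fintype.card_fin,
        nsmul_eq_mul, Nat.cast_pow]
      rw [← hd] at h1 ⊢
      rw [← mul_assoc, ← mul_pow, mul_inv_cancel₀ (by positivity), one_pow, one_mul]
      exact h1
    have hQpos : ∀ w, 0 < a w → 0 < R p d m ((List.ofFn w).drop j) := fun w hw =>
      R_pos p d (by linarith) m hm _ _ rfl (hsubj w hw j)
    have hg := gibbs a (fun w => (d⁻¹) ^ j * R p d m ((List.ofFn w).drop j)) (U X φ n) hU ha0 rfl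
      (fun w => mul_nonneg (by positivity) (R_nonneg p hp d (by linarith) m hm _ _ rfl))
      hQs (fun w hw => mul_pos (by positivity) (hQpos w hw))
    refine hg.trans (Finset.sum_le_sum fun w _ => ?_)
    rcases (ha0 w).lt_or_eq with h | h
    · refine mul_le_mul_of_nonneg_left ?_ h.le
      obtain ⟨h1, h2, h3⟩ := hapos w h
      rw [h3, Real.log_mul (by positivity) (hQpos w h).ne', Real.log_pow, Real.log_inv]
      have hjl : j ≤ (List.ofFn w).length := by simp; omega
      obtain ⟨h4, h5, h6⟩ := log_split X φ C hX h0 hCp hsub _ h1 h2 j hjl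
      have h7 := RS_bound X φ C hX h0 hCp hsub m hm ε B hB p d hd1 _ ((List.ofFn w).drop j) rfl
        (lang_take_drop hX h1 j hjl).2 h5 (hsubj w h j)
      have h8 := hB ((List.ofFn w).take j) (by simp; omega)
      have h9 : (j : ℝ) * Real.log d ≤ m * Real.log d := by gcongr
      rw [← hG] at h7
      linarith
    · rw [← h]; simp
  have hsum := Finset.sum_le_sum (fun j hj' => hj j (Finset.mem_range.1 hj'))
  rw [Finset.sum_const, Finset.card_range, nsmul_eq_mul, Finset.sum_comm] at hsum
  refine hsum.trans ?_
  have hUa : U X φ n = ∑ w, a w := rfl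
  rw [hUa, Finset.sum_mul, ← Finset.sum_add_distrib]
  refine Finset.sum_le_sum fun w _ => ?_
  rw [← Finset.mul_sum, ← mul_add]
  rcases (ha0 w).lt_or_eq with h | h
  swap
  · rw [← h]; simp
  refine mul_le_mul_of_nonneg_left ?_ h.le
  obtain ⟨h1, h2, h3⟩ := hapos w h
  rw [Finset.sum_add_distrib, Finset.sum_const, Finset.card_range, nsmul_eq_mul]
  obtain ⟨m', rfl⟩ : ∃ m', m = m' + 1 := ⟨m - 1, by omega⟩
  rw [T_sum, List.length_ofFn]
  have e1 : ∑ i ∈ Finset.range (n + 1 - (m' + 1)), G (((List.ofFn w).drop i).take (m' + 1))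
      = ∑ i ∈ Finset.range (n + 1 - (m' + 1)), G (wordOf (shiftMap^[i] (xs w)) (m' + 1)) := by
    refine Finset.sum_congr rfl fun i hi => ?_
    rw [Finset.mem_range] at hi
    rw [← hxs w h1, wordOf_drop_take _ _ _ _ (by omega)]
  rw [e1]
  have e2 : n = (n + 1 - (m' + 1)) + m' := by omega
  have e3 : ∑ i ∈ Finset.range n, G (wordOf (shiftMap^[i] (xs w)) (m' + 1))
    = ∑ i ∈ Finset.range (n + 1 - (m' + 1)), G (wordOf (shiftMap^[i] (xs w)) (m' + 1))
      + ∑ i ∈ Finset.range m',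
        G (wordOf (shiftMap^[n + 1 - (m' + 1) + i] (xs w)) (m' + 1)) := by
    conv_lhs => rw [e2]
    rw [Finset.sum_range_add]
  have e4 : (m' : ℝ) * Real.log ε ≤ ∑ i ∈ Finset.range m',
        G (wordOf (shiftMap^[n + 1 - (m' + 1) + i] (xs w)) (m' + 1)) := by
    have := Finset.card_nsmul_le_sum (Finset.range m') (fun i =>
        G (wordOf (shiftMap^[n + 1 - (m' + 1) + i] (xs w)) (m' + 1))) (Real.log ε)
        (fun i _ => hGlow _)
    simpa using this
  rw [e3]
  have hc : ((m' + 1 : ℕ) : ℝ) = m' + 1 := by push_cast; ring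
  rw [hc]
  linarith

end comb

end WES

namespace WES

lemma emp {Ω ι : Type*} [MeasurableSpace Ω] [MeasurableSingletonClass Ω] [Fintype ι]
    (c : ι → ℝ) (y : ι → Ω) (hc : ∀ i, 0 ≤ c i) (h1 : ∑ i, c i = 1) :
    ∃ ν : ProbabilityMeasure Ω, ∀ f : Ω → ℝ, ∫ x, f x ∂(ν : Measure Ω) = ∑ i, c i * f (y i) := by
  have hp : IsProbabilityMeasure (∑ i, ENNReal.ofReal (c i) • Measure.dirac (y i)) := by
    constructor
    rw [Measure.finsetSum_apply]
    simp only [Measure.smul_apply, measure_univ, smul_eq_mul, mul_one]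
    rw [← ENNReal.ofReal_sum_of_nonneg (fun i _ => hc i), h1, ENNReal.ofReal_one]
  refine ⟨⟨_, hp⟩, fun f => ?_⟩
  rw [ProbabilityMeasure.coe_mk, integral_finsetSum_measure]
  · refine Finset.sum_congr rfl fun i _ => ?_
    rw [integral_smul_measure, integral_dirac, ENNReal.toReal_ofReal (hc i), smul_eq_mul]
  · intro i _
    exact (integrable_dirac (by simp)).smul_measure ENNReal.ofReal_ne_top

section lower
variable {A : Type} [Fintype A] [TopologicalSpace A]
    [DiscreteTopology A] [MeasurableSpace A] [BorelSpace A]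

lemma emp_words (X : Set (ℕ → A)) (φ : List A → ℝ) (h0 : ∀ I, Lang X I → 0 ≤ φ I) (n : ℕ)
    (hn : 0 < n) (hU : 0 < U X φ n) (xs : (Fin n → A) → (ℕ → A)) :
    ∃ ν : ProbabilityMeasure (ℕ → A), ∀ f : (ℕ → A) → ℝ,
      ∫ x, f x ∂(ν : Measure (ℕ → A)) = (U X φ n * n)⁻¹ *
      ∑ w : Fin n → A, (if Lang X (List.ofFn w) then φ (List.ofFn w) else 0) *
        ∑ i ∈ Finset.range n, f (shiftMap^[i] (xs w)) := by
  have hn' : (0 : ℝ) < n := by exact_mod_cast hn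
  obtain ⟨ν, hν⟩ := emp (ι := (Fin n → A) × Fin n)
    (fun q => (U X φ n * n)⁻¹ * (if Lang X (List.ofFn q.1) then φ (List.ofFn q.1) else 0))
    (fun q => shiftMap^[q.2] (xs q.1))
    (by
      intro q
      refine mul_nonneg (by positivity) ?_
      split_ifs with h
      · exact h0 _ h
      · exact le_rfl)
    (by
      rw [Fintype.sum_prod_type]
      simp only [Finset.sum_const, Finset.card_univ, Fintype.card_fin, nsmul_eq_mul]
      rw [← Finset.mul_sum, ← Finset.mul_sum]
      change (n : ℝ) * ((U X φ n * n)⁻¹ * U X φ n) = 1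
      field_simp)
  refine ⟨ν, fun f => ?_⟩
  rw [hν, Fintype.sum_prod_type, Finset.mul_sum]
  refine Finset.sum_congr rfl fun w _ => ?_
  simp only
  rw [← Finset.mul_sum, Fin.sum_univ_eq_sum_range (fun i => f (shiftMap^[i] (xs w))), mul_assoc]

/-- weak limit -/
lemma exists_limit (X : Set (ℕ → A)) (hX : IsSubshift X) (φ : List A → ℝ) (C : ℝ)
    (h0 : ∀ I, Lang X I → 0 ≤ φ I) (hC : 1 ≤ C)
    (hsub : ∀ I J, Lang X (I ++ J) → φ (I ++ J) ≤ C * φ I * φ J) (b : ℝ)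
    (hb : ∃ᶠ n : ℕ in atTop, 0 < n ∧ 0 < U X φ n ∧ b * n ≤ Real.log (U X φ n)) :
    ∃ μ ∈ MInv X, ∀ m : ℕ, 0 < m → ∀ ε : ℝ, 0 < ε → ε ≤ 1 →
      m * b ≤ Real.log C + ∑ v : Fin m → A, (μ : Measure (ℕ → A)).real (cyl (List.ofFn v)) *
        Real.log (max (φ (List.ofFn v)) ε) + Hblock X (μ : Measure (ℕ → A)) m := by
  set F : Set ℕ := {n | 0 < n ∧ 0 < U X φ n ∧ b * n ≤ Real.log (U X φ n)} with hF
  have hXc : IsClosed X := hX.2.1.isClosed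
  have hXm : MeasurableSet X := hXc.measurableSet
  have hne : NeBot (atTop ⊓ 𝓟 F) := by
    rw [← frequently_mem_iff_neBot]; exact hb
  obtain ⟨V, hV⟩ := Ultrafilter.exists_le (atTop ⊓ 𝓟 F)
  have hV1 : (V : Filter ℕ) ≤ atTop := hV.trans inf_le_left
  have hVF : ∀ᶠ n in (V : Filter ℕ), n ∈ F := hV.trans inf_le_right (mem_principal_self F)
  -- choice of points
  have hxs : ∀ n : ℕ, ∃ xs : (Fin n → A) → (ℕ → A), (∀ w, xs w ∈ X) ∧
      ∀ w, Lang X (List.ofFn w) → wordOf (xs w) n = List.ofFn w := by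
    intro n
    have : ∀ w : Fin n → A, ∃ x : ℕ → A, x ∈ X ∧ (Lang X (List.ofFn w) →
        wordOf x n = List.ofFn w) := by
      intro w
      by_cases h : Lang X (List.ofFn w)
      · obtain ⟨x, hx, hw⟩ := lang_exists h
        rw [List.length_ofFn] at hw
        exact ⟨x, hx, fun _ => hw⟩
      · obtain ⟨x, hx⟩ := hX.1
        exact ⟨x, hx, fun h' => absurd h' h⟩
    choose xs h1 h2 using this
    exact ⟨xs, h1, h2⟩
  choose xs hxsX hxsw using hxs
  have hν : ∀ n : ℕ, ∃ ν : ProbabilityMeasure (ℕ → A), n ∈ F → ∀ f : (ℕ → A) → ℝ,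
      ∫ x, f x ∂(ν : Measure (ℕ → A)) = (U X φ n * n)⁻¹ *
      ∑ w : Fin n → A, (if Lang X (List.ofFn w) then φ (List.ofFn w) else 0) *
        ∑ i ∈ Finset.range n, f (shiftMap^[i] (xs n w)) := by
    intro n
    by_cases hn : n ∈ F
    · obtain ⟨ν, hν⟩ := emp_words X φ h0 n hn.1 hn.2.1 (xs n)
      exact ⟨ν, fun _ => hν⟩
    · obtain ⟨x, hx⟩ := hX.1
      exact ⟨⟨Measure.dirac x, inferInstance⟩, fun h => absurd h hn⟩
  choose ν hν using hν
  obtain ⟨μ, hμ⟩ : ∃ μ, Tendsto ν (V : Filter ℕ) (𝓝 μ) :=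
    ⟨_, (V.map ν).le_nhds_lim⟩
  have hintg := ProbabilityMeasure.tendsto_iff_forall_integral_tendsto.1 hμ
  have ha0 : ∀ (n : ℕ) (w : Fin n → A),
      0 ≤ (if Lang X (List.ofFn w) then φ (List.ofFn w) else 0) := by
    intro n w; split_ifs with h
    · exact h0 _ h
    · exact le_rfl
  -- support
  have hνX : ∀ n ∈ F, (ν n : Measure (ℕ → A)) X = 1 := by
    intro n hn
    have h := hν n hn (X.indicator 1)
    rw [integral_indicator_one hXm] at h
    have e : ∀ w i, X.indicator (1 : (ℕ → A) → ℝ) (shiftMap^[i] (xs n w)) = 1 := by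
      intro w i
      rw [Set.indicator_of_mem (shift_mem hX (hxsX n w) i)]; rfl
    simp only [e, Finset.sum_const, Finset.card_range, nsmul_eq_mul, mul_one] at h
    rw [← Finset.sum_mul] at h
    change _ = (U X φ n * n)⁻¹ * (U X φ n * n) at h
    have hn' : (0 : ℝ) < n := by exact_mod_cast hn.1
    rw [inv_mul_cancel₀ (mul_pos hn.2.1 hn').ne'] at h
    rw [← ofReal_measureReal, h, ENNReal.ofReal_one]
  have hμX : (μ : Measure (ℕ → A)) X = 1 := by
    refine le_antisymm prob_le_one ?_
    have h := ProbabilityMeasure.limsup_measure_closed_le_of_tendsto hμ hXc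
    rw [limsup_congr (v := fun _ => (1 : ℝ≥0∞)) (hVF.mono fun n hn => hνX n hn)] at h
    rwa [limsup_const] at h
  -- invariance
  have hninv : Tendsto (fun n : ℕ => ((n : ℝ))⁻¹) (V : Filter ℕ) (𝓝 0) :=
    tendsto_inv_atTop_nhds_zero_nat.mono_left hV1
  have hμσ : (μ : Measure (ℕ → A)).map shiftMap = (μ : Measure (ℕ → A)) := by
    have hpm : IsProbabilityMeasure ((μ : Measure (ℕ → A)).map shiftMap) :=
      Measure.isProbabilityMeasure_map meas_shift.aemeasurable
    refine ext_of_forall_integral_eq_of_IsFiniteMeasure fun f => ?_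
    rw [integral_map meas_shift.aemeasurable f.continuous.aestronglyMeasurable]
    have t1 := hintg f
    have t2 := hintg (f.compContinuous ⟨shiftMap, cont_shift⟩)
    have t3 := t2.sub t1
    have t4 : Tendsto (fun n : ℕ => (2 * ‖f‖) * ((n : ℝ))⁻¹) (V : Filter ℕ) (𝓝 0) := by
      simpa using hninv.const_mul (2 * ‖f‖)
    have t5 := squeeze_zero_norm' (a := fun n : ℕ => (2 * ‖f‖) * ((n : ℝ))⁻¹)
      (f := fun n => ∫ x, (f.compContinuous ⟨shiftMap, cont_shift⟩) x ∂(ν n : Measure (ℕ → A))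
        - ∫ x, f x ∂(ν n : Measure (ℕ → A))) (t₀ := (V : Filter ℕ)) (by
        filter_upwards [hVF] with n hn
        have hn' : (0 : ℝ) < n := by exact_mod_cast hn.1
        have hUp := hn.2.1
        rw [hν n hn, hν n hn, ← mul_sub, ← Finset.sum_sub_distrib, norm_mul, norm_inv,
          Real.norm_of_nonneg (mul_pos hn.2.1 hn').le]
        have hb : ‖∑ w : Fin n → A,
            ((if Lang X (List.ofFn w) then φ (List.ofFn w) else 0) *
              ∑ i ∈ Finset.range n,
                (f.compContinuous ⟨shiftMap, cont_shift⟩) (shiftMap^[i] (xs n w)) -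
            (if Lang X (List.ofFn w) then φ (List.ofFn w) else 0) *
              ∑ i ∈ Finset.range n, f (shiftMap^[i] (xs n w)))‖ ≤ U X φ n * (2 * ‖f‖) := by
          refine (norm_sum_le _ _).trans ?_
          rw [U, Finset.sum_mul]
          refine Finset.sum_le_sum fun w _ => ?_
          rw [← mul_sub, norm_mul, Real.norm_of_nonneg (ha0 n w)]
          refine mul_le_mul_of_nonneg_left ?_ (ha0 n w)
          have e : ∀ i, (f.compContinuous ⟨shiftMap, cont_shift⟩) (shiftMap^[i] (xs n w))
              = f (shiftMap^[i + 1] (xs n w)) := by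
            intro i
            rw [Function.iterate_succ_apply']; rfl
          simp only [e]
          rw [← Finset.sum_sub_distrib, Finset.sum_range_sub (fun i => f (shiftMap^[i] (xs n w)))]
          refine (norm_sub_le _ _).trans ?_
          have := f.norm_coe_le_norm (shiftMap^[n] (xs n w))
          have := f.norm_coe_le_norm (shiftMap^[0] (xs n w))
          linarith
        calc _ ≤ (U X φ n * n)⁻¹ * (U X φ n * (2 * ‖f‖)) :=
              mul_le_mul_of_nonneg_left hb (by positivity)
          _ = 2 * ‖f‖ * (n : ℝ)⁻¹ := by field_simp) t4
    have := tendsto_nhds_unique t3 t5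
    exact sub_eq_zero.1 this
  -- cylinders
  have hcyl : ∀ (m : ℕ) (v : Fin m → A), Tendsto
      (fun n => (ν n : Measure (ℕ → A)).real (cyl (List.ofFn v))) (V : Filter ℕ)
      (𝓝 ((μ : Measure (ℕ → A)).real (cyl (List.ofFn v)))) := by
    intro m v
    have hc : Continuous (fun x : ℕ → A => if (fun i : Fin m => x i) = v then (1 : ℝ) else 0) :=
      (continuous_of_discreteTopology (f := fun u : Fin m → A => if u = v then (1 : ℝ) else 0)).comp
        (by fun_prop : Continuous (fun (x : ℕ → A) (i : Fin m) => x i))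
    have h := hintg (BoundedContinuousFunction.mkOfCompact ⟨_, hc⟩)
    have e : ∀ ρ : Measure (ℕ → A),
        ∫ x, (BoundedContinuousFunction.mkOfCompact ⟨_, hc⟩) x ∂ρ = ρ.real (cyl (List.ofFn v)) := by
      intro ρ
      rw [← integral_indicator_one (meas_cyl _)]
      congr 1
      ext x
      simp only [BoundedContinuousFunction.mkOfCompact_apply, ContinuousMap.coe_mk,
        Set.indicator_apply, mem_cyl_ofFn, Pi.one_apply]
    simp only [e] at h
    exact h
  refine ⟨μ, ⟨hμσ, hμX⟩, ?_⟩
  intro m hm ε hε hε1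
  obtain ⟨D, hD⟩ := main_ineq X φ C hX h0 hC hsub m hm ε hε hε1
  have hev : ∀ᶠ n : ℕ in (V : Filter ℕ), (m : ℝ) * b ≤ D * (n : ℝ)⁻¹ +
      ∑ v : Fin m → A, ((ν n : Measure (ℕ → A)).real (cyl (List.ofFn v)) *
        (Real.log C + Real.log (max (φ (List.ofFn v)) ε))
        - (ν n : Measure (ℕ → A)).real (cyl (List.ofFn v)) *
          Real.log ((ν n : Measure (ℕ → A)).real (cyl (List.ofFn v)))) := by
    filter_upwards [hVF, hV1 (eventually_ge_atTop m)] with n hn hmn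
    have hn' : (0 : ℝ) < n := by exact_mod_cast hn.1
    have hUp := hn.2.1
    have h := hD n hmn (fun l => (ν n : Measure (ℕ → A)).real (cyl l))
      (fun _ => measureReal_nonneg) (fun _ => measureReal_le_one) (sum_one _ m).le (xs n)
      (hxsw n) (by
        intro w hw hpos i hi
        have h := hν n hn ((cyl (wordOf (shiftMap^[i] (xs n w)) m)).indicator 1)
        rw [integral_indicator_one (meas_cyl _)] at h
        beta_reduce
        rw [h]
        refine mul_pos (by positivity) ?_
        have hind : ∀ x, 0 ≤ (cyl (wordOf (shiftMap^[i] (xs n w)) m)).indicator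
            (1 : (ℕ → A) → ℝ) x := fun x => Set.indicator_nonneg (fun _ _ => zero_le_one) x
        refine Finset.sum_pos' (fun w' _ => mul_nonneg (ha0 n w')
          (Finset.sum_nonneg fun i _ => hind _)) ⟨w, Finset.mem_univ _, ?_⟩
        rw [if_pos hw]
        refine mul_pos hpos (Finset.sum_pos' (fun i _ => hind _)
          ⟨i, Finset.mem_range.2 hi, ?_⟩)
        rw [Set.indicator_of_mem (mem_cyl_wordOf _ _)]
        exact one_pos) hn.2.1
    have h2 := hν n hn (fun x => Real.log C + Real.log (max (φ (wordOf x m)) ε)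
          - Real.log ((ν n : Measure (ℕ → A)).real (cyl (wordOf x m))))
    rw [int_words _ m (fun l => Real.log C + Real.log (max (φ l) ε)
          - Real.log ((ν n : Measure (ℕ → A)).real (cyl l)))] at h2
    have h3 : ∀ Z W : ℝ, Z = (U X φ n * n)⁻¹ * W → W = U X φ n * n * Z := by
      intro Z W h; rw [h]; field_simp
    rw [h3 _ _ h2] at h
    have h4 : (m : ℝ) * (b * n) ≤ D + n * ∑ v : Fin m → A,
        (ν n : Measure (ℕ → A)).real (cyl (List.ofFn v)) * (Real.log C +
          Real.log (max (φ (List.ofFn v)) ε)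
          - Real.log ((ν n : Measure (ℕ → A)).real (cyl (List.ofFn v)))) := by
      have h5 : (m : ℝ) * (b * n) ≤ m * Real.log (U X φ n) :=
        mul_le_mul_of_nonneg_left hn.2.2 (by positivity)
      refine h5.trans ?_
      refine le_of_mul_le_mul_left ?_ hUp
      linarith
    have h6 : ∑ v : Fin m → A, ((ν n : Measure (ℕ → A)).real (cyl (List.ofFn v)) *
        (Real.log C + Real.log (max (φ (List.ofFn v)) ε))
        - (ν n : Measure (ℕ → A)).real (cyl (List.ofFn v)) *
          Real.log ((ν n : Measure (ℕ → A)).real (cyl (List.ofFn v))))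
        = ∑ v : Fin m → A,
        (ν n : Measure (ℕ → A)).real (cyl (List.ofFn v)) * (Real.log C +
          Real.log (max (φ (List.ofFn v)) ε)
          - Real.log ((ν n : Measure (ℕ → A)).real (cyl (List.ofFn v)))) :=
      Finset.sum_congr rfl fun v _ => by ring
    rw [h6]
    refine le_of_mul_le_mul_left ?_ hn'
    rw [mul_add]
    have h7 : (n : ℝ) * (D * (n : ℝ)⁻¹) = D := by field_simp
    rw [h7]
    linarith
  have hlim : Tendsto (fun n : ℕ => D * (n : ℝ)⁻¹ +
      ∑ v : Fin m → A, ((ν n : Measure (ℕ → A)).real (cyl (List.ofFn v)) *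
        (Real.log C + Real.log (max (φ (List.ofFn v)) ε))
        - (ν n : Measure (ℕ → A)).real (cyl (List.ofFn v)) *
          Real.log ((ν n : Measure (ℕ → A)).real (cyl (List.ofFn v))))) (V : Filter ℕ)
      (𝓝 (D * 0 + ∑ v : Fin m → A, ((μ : Measure (ℕ → A)).real (cyl (List.ofFn v)) *
        (Real.log C + Real.log (max (φ (List.ofFn v)) ε))
        - (μ : Measure (ℕ → A)).real (cyl (List.ofFn v)) *
          Real.log ((μ : Measure (ℕ → A)).real (cyl (List.ofFn v)))))) := by
    refine (hninv.const_mul D).add (tendsto_finsetSum _ fun v _ => ?_)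
    exact ((hcyl m v).mul_const _).sub ((Real.continuous_mul_log.tendsto _).comp (hcyl m v))
  have hfin := ge_of_tendsto hlim hev
  rw [Finset.sum_sub_distrib] at hfin
  simp only [mul_add] at hfin
  rw [Finset.sum_add_distrib, ← Finset.sum_mul, sum_one] at hfin
  rw [Hblock_eq _ hXm hμX]
  linarith

lemma lower (X : Set (ℕ → A)) (hX : IsSubshift X) (φ : List A → ℝ) (C : ℝ)
    (h0 : ∀ I, Lang X I → 0 ≤ φ I) (hC : 1 ≤ C)
    (hsub : ∀ I J, Lang X (I ++ J) → φ (I ++ J) ≤ C * φ I * φ J) (b : ℝ)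
    (hb : ∃ᶠ n : ℕ in atTop, 0 < n ∧ 0 < U X φ n ∧ b * n ≤ Real.log (U X φ n)) :
    ∃ μ ∈ MInv X, (b : EReal) ≤ eqVal X (genPot φ) μ := by
  obtain ⟨μ, hμ, h⟩ := exists_limit X hX φ C h0 hC hsub b hb
  refine ⟨μ, hμ, ?_⟩
  have hXm : MeasurableSet X := hX.2.1.isClosed.measurableSet
  set M : List A → ℝ := fun l => (μ : Measure (ℕ → A)).real (cyl l) with hM
  have hM0 : ∀ l, 0 ≤ M l := fun _ => measureReal_nonneg
  have hposφ : ∀ m : ℕ, 0 < m → ∀ v : Fin m → A, 0 < M (List.ofFn v) → 0 < φ (List.ofFn v) := by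
    intro m hm v hv
    by_contra hc
    push Not at hc
    set K : ℝ := Real.log C + ∑ v : Fin m → A, M (List.ofFn v) * Real.log (max (φ (List.ofFn v)) 1)
      + Hblock X (μ : Measure (ℕ → A)) m with hK
    have key : ∀ t : ℝ, 0 ≤ t → m * b ≤ K - M (List.ofFn v) * t := by
      intro t ht
      have h1 := h m hm (Real.exp (-t)) (Real.exp_pos _) (Real.exp_le_one_iff.2 (by linarith))
      have h2 : ∑ u : Fin m → A, M (List.ofFn u) * Real.log (max (φ (List.ofFn u)) (Real.exp (-t)))
          ≤ ∑ u : Fin m → A, (M (List.ofFn u) * Real.log (max (φ (List.ofFn u)) 1) +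
            if u = v then - (M (List.ofFn v) * t) else 0) := by
        refine Finset.sum_le_sum fun u _ => ?_
        split_ifs with huv
        · subst huv
          rw [max_eq_right (hc.trans (Real.exp_pos _).le), max_eq_right (hc.trans zero_le_one),
            Real.log_exp, Real.log_one]
          linarith
        · rw [add_zero]
          refine mul_le_mul_of_nonneg_left (Real.log_le_log ?_ ?_) (hM0 _)
          · exact lt_of_lt_of_le (Real.exp_pos _) (le_max_right _ _)
          · exact max_le_max le_rfl (Real.exp_le_one_iff.2 (by linarith))
      rw [Finset.sum_add_distrib, Finset.sum_ite_eq' Finset.univ v, if_pos (Finset.mem_univ _)] at h2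
      simp only [hM] at h2 hK ⊢
      linarith
    have k1 := key ((|K - m * b| + 1) / M (List.ofFn v)) (by positivity)
    rw [mul_div_cancel₀ _ hv.ne'] at k1
    have := le_abs_self (K - m * b)
    linarith
  have hreal : ∀ m : ℕ, 0 < m → m * b ≤ Real.log C +
      ∑ v : Fin m → A, M (List.ofFn v) * Real.log (φ (List.ofFn v))
      + Hblock X (μ : Measure (ℕ → A)) m := by
    intro m hm
    have ht : Tendsto (fun ε : ℝ => Real.log C + ∑ v : Fin m → A, M (List.ofFn v) *
        Real.log (max (φ (List.ofFn v)) ε) + Hblock X (μ : Measure (ℕ → A)) m) (𝓝[>] 0)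
        (𝓝 (Real.log C +
      ∑ v : Fin m → A, M (List.ofFn v) * Real.log (φ (List.ofFn v))
      + Hblock X (μ : Measure (ℕ → A)) m)) := by
      refine Tendsto.add_const _ (Tendsto.const_add _ (tendsto_finsetSum _ fun v _ => ?_))
      rcases (hM0 (List.ofFn v)).lt_or_eq with hv | hv
      · have hp := hposφ m hm v hv
        refine Tendsto.const_mul _ (Tendsto.log ?_ hp.ne')
        have : Tendsto (fun ε : ℝ => max (φ (List.ofFn v)) ε) (𝓝 0)
            (𝓝 (max (φ (List.ofFn v)) 0)) := (continuous_const.max continuous_id).tendsto 0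
        rw [max_eq_left hp.le] at this
        exact this.mono_left nhdsWithin_le_nhds
      · rw [← hv]; simp
    refine ge_of_tendsto ht ?_
    filter_upwards [Ioc_mem_nhdsGT (show (0 : ℝ) < 1 by norm_num)] with ε hε
    exact h m hm ε hε.1 hε.2
  have tH := Hblock_tendsto (μ : Measure (ℕ → A)) hXm hμ.2 hμ.1
  have tu : Tendsto (fun m : ℕ => Real.log C * (m : ℝ)⁻¹ + Hblock X (μ : Measure (ℕ → A)) m / m)
      atTop (𝓝 (ent X (μ : Measure (ℕ → A)))) := by
    simpa using (tendsto_inv_atTop_nhds_zero_nat.const_mul (Real.log C)).add tH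
  have tu' : Tendsto (fun m : ℕ => ((Real.log C * (m : ℝ)⁻¹ +
      Hblock X (μ : Measure (ℕ → A)) m / m : ℝ) : EReal))
      atTop (𝓝 ((ent X (μ : Measure (ℕ → A)) : ℝ) : EReal)) :=
    (continuous_coe_real_ereal.tendsto _).comp tu
  have hl := EReal.liminf_add_le (f := atTop) (u := fun m : ℕ => ((Real.log C * (m : ℝ)⁻¹ +
      Hblock X (μ : Measure (ℕ → A)) m / m : ℝ) : EReal))
      (v := fun m : ℕ => (((m : ℝ)⁻¹ : ℝ) : EReal) * intlog (μ : Measure (ℕ → A)) (genPot φ m))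
      (by rw [tu'.limsup_eq]; left; simp) (by rw [tu'.limsup_eq]; left; simp)
  rw [tu'.limsup_eq] at hl
  unfold eqVal PhiStar
  rw [add_comm]
  refine le_trans ?_ hl
  refine le_liminf_of_le (by isBoundedDefault) ?_
  filter_upwards [eventually_gt_atTop 0] with m hm
  have hm' : (0 : ℝ) < m := by exact_mod_cast hm
  rw [Pi.add_apply, intlog_real _ φ m (hposφ m hm), ← EReal.coe_mul, ← EReal.coe_add,
    EReal.coe_le_coe_iff]
  refine le_of_mul_le_mul_left ((hreal m hm).trans_eq ?_) hm'
  simp only [hM]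
  field_simp
  ring

end lower

end WES

/-- Proposition 3.2(i) / `pro-2.1`(i): variational principle
`sup{Φ_*(μ) + h_μ} = lim (1/n) log Σ_{I ∈ L_n(X)} φ(I)` for a potential generated by a
sub-multiplicative word function. -/
theorem weighted_eq_states_stmt_3 {A : Type} [Fintype A] [TopologicalSpace A]
    [DiscreteTopology A] [MeasurableSpace A] [BorelSpace A]
    (X : Set (ℕ → A)) (hX : IsSubshift X)
    (φ : List A → ℝ) (hφ : Submult X φ) :
    Tendsto
      (fun n : ℕ => (((n : ℝ)⁻¹ : ℝ) : EReal) *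
        elog (∑ w : Fin n → A, if Lang X (List.ofFn w) then φ (List.ofFn w) else 0))
      atTop (nhds (⨆ μ ∈ MInv X, eqVal X (genPot φ) μ)) := by
  obtain ⟨h0, -, c, hc, hsub⟩ := hφ
  have hXm : MeasurableSet X := hX.2.1.isClosed.measurableSet
  have hsub' : ∀ I J, Lang X (I ++ J) → φ (I ++ J) ≤ max c⁻¹ 1 * φ I * φ J := by
    intro I J h
    have h1 : Lang X I ∧ Lang X J := by
      have := WES.lang_take_drop hX h I.length (by simp)
      rwa [List.take_left' rfl, List.drop_left' rfl] at this
    refine (hsub I J h).trans ?_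
    have := h0 _ h1.1
    have := h0 _ h1.2
    gcongr
    exact le_max_left _ _
  change Tendsto (fun n : ℕ => (((n : ℝ)⁻¹ : ℝ) : EReal) * elog (WES.U X φ n)) atTop _
  refine tendsto_of_le_liminf_of_limsup_le ?_ ?_
  · exact iSup₂_le fun μ hμ => WES.upper hXm φ h0 μ hμ
  · by_contra hlt
    push Not at hlt
    obtain ⟨b, hb1, hb2⟩ := EReal.lt_iff_exists_real_btwn.1 hlt
    have hf := frequently_lt_of_lt_limsup (by isBoundedDefault) hb2
    have hf' : ∃ᶠ n : ℕ in atTop, 0 < n ∧ 0 < WES.U X φ n ∧ b * n ≤ Real.log (WES.U X φ n) := by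
      refine (hf.and_eventually (eventually_gt_atTop 0)).mono ?_
      rintro n ⟨h1, hn⟩
      have hn' : (0 : ℝ) < n := by exact_mod_cast hn
      have hn'' : (0 : ℝ) < (n : ℝ)⁻¹ := by positivity
      by_cases hU : WES.U X φ n ≤ 0
      · rw [elog, if_pos hU, EReal.coe_mul_bot_of_pos hn''] at h1
        exact absurd h1 not_lt_bot
      · rw [elog, if_neg hU, ← EReal.coe_mul, EReal.coe_lt_coe_iff] at h1
        refine ⟨hn, not_le.1 hU, ?_⟩
        rw [inv_mul_eq_div, lt_div_iff₀ hn'] at h1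
        exact h1.le
    obtain ⟨μ, hμ, hle⟩ := WES.lower X hX φ _ h0 (le_max_right _ _) hsub' b hf'
    exact absurd (hle.trans (le_iSup₂ (f := fun μ _ => eqVal X (genPot φ) μ) μ hμ))
      (not_le.2 hb1)
end

section
/- Let (X, σ_X) be a one-sided subshift over a finite alphabet and let Φ = (log φ_n)_{n=1}^∞ ∈ C_sa(X, σ_X) be generated by a sub-multiplicative function φ : L(X) → [0,∞). Then the set I(Φ) of equilibrium states of Φ is a non-empty compact convex subset of M(X, σ_X), and each extreme point of I(Φ) is an ergodic measure. -/
open MeasureTheory Filter Topology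
open scoped Classical ENNReal NNReal

set_option linter.unusedSectionVars false

section Helpers

variable {A : Type} [Fintype A] [TopologicalSpace A] [DiscreteTopology A] [MeasurableSpace A]
  [BorelSpace A]

/-- first `n` letters -/
def pre {A : Type} (n : ℕ) (x : ℕ → A) : Fin n → A := fun i => x i

lemma cyl_ofFn {n : ℕ} (w : Fin n → A) : cyl (List.ofFn w) = pre n ⁻¹' {w} := by
  ext x
  simp only [cyl, Set.mem_ofPred_eq, Set.mem_preimage, Set.mem_singleton_iff]
  constructor
  · intro h
    funext i
    have := h ⟨i, by simp⟩
    simpa [pre] using this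
  · intro h i
    subst h
    simp [pre]

lemma continuous_pre (n : ℕ) : Continuous (pre n : (ℕ → A) → _) := by
  unfold pre; fun_prop

lemma measurable_pre (n : ℕ) : Measurable (pre n : (ℕ → A) → _) := by
  unfold pre; fun_prop

lemma continuous_shift : Continuous (shiftMap : (ℕ → A) → _) := by
  unfold shiftMap; fun_prop

lemma measurable_shift : Measurable (shiftMap : (ℕ → A) → _) := by
  unfold shiftMap; fun_prop

lemma isClopen_pre {n : ℕ} (s : Set (Fin n → A)) : IsClopen (pre n ⁻¹' s) :=
  (isClopen_discrete s).preimage (continuous_pre n)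

/-- measure of a cylinder -/
def pw (μ : Measure (ℕ → A)) (n : ℕ) (w : Fin n → A) : ℝ := μ.real (pre n ⁻¹' {w})

/-- block entropy without `X` -/
noncomputable def Hn (μ : Measure (ℕ → A)) (n : ℕ) : ℝ := ∑ w : Fin n → A, Real.negMulLog (pw μ n w)

/-- real part of the integral of the potential -/
noncomputable def Rn (φ : List A → ℝ) (μ : Measure (ℕ → A)) (n : ℕ) : ℝ :=
  ∑ w : Fin n → A, pw μ n w * Real.log (φ (List.ofFn w))

/-- mass of the bad words -/
noncomputable def Nn (φ : List A → ℝ) (μ : Measure (ℕ → A)) (n : ℕ) : ℝ :=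
  ∑ w : Fin n → A, if φ (List.ofFn w) ≤ 0 then pw μ n w else 0

lemma pw_nonneg (μ : Measure (ℕ → A)) (n : ℕ) (w : Fin n → A) : 0 ≤ pw μ n w :=
  measureReal_nonneg

lemma mw_eq {X : Set (ℕ → A)} (hX : MeasurableSet X) (μ : Measure (ℕ → A))
    [IsProbabilityMeasure μ] (h : μ X = 1) {n : ℕ} (w : Fin n → A) :
    mw X μ (List.ofFn w) = pw μ n w := by
  unfold mw pw
  rw [cyl_ofFn, Measure.real]
  congr 1
  refine measure_inter_conull ?_
  exact (prob_compl_eq_zero_iff hX).2 h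

lemma Hblock_eq {X : Set (ℕ → A)} (hX : MeasurableSet X) (μ : Measure (ℕ → A))
    [IsProbabilityMeasure μ] (h : μ X = 1) (n : ℕ) :
    Hblock X μ n = Hn μ n := by
  unfold Hblock Hn
  simp only [mw_eq hX μ h, Real.negMulLog, ← Finset.sum_neg_distrib, neg_mul]

lemma integral_pre (μ : Measure (ℕ → A)) [IsProbabilityMeasure μ] (n : ℕ)
    (f : (Fin n → A) → ℝ) : ∫ x, f (pre n x) ∂μ = ∑ w, pw μ n w * f w := by
  have hm : Measurable f := (continuous_of_discreteTopology).measurable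
  rw [← integral_map (measurable_pre n).aemeasurable hm.aestronglyMeasurable]
  have := Measure.isProbabilityMeasure_map (μ := μ) (measurable_pre (A := A) n).aemeasurable
  rw [integral_fintype (Integrable.of_finite)]
  refine Finset.sum_congr rfl fun w _ => ?_
  rw [smul_eq_mul, pw, map_measureReal_apply (measurable_pre n) (measurableSet_singleton w)]

lemma lintegral_pre (μ : Measure (ℕ → A)) (n : ℕ)
    (f : (Fin n → A) → ℝ≥0∞) : ∫⁻ x, f (pre n x) ∂μ = ∑ w, f w * μ (pre n ⁻¹' {w}) := by
  have hm : Measurable f := (continuous_of_discreteTopology).measurable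
  rw [← lintegral_map hm (measurable_pre n)]
  rw [lintegral_fintype]
  refine Finset.sum_congr rfl fun w _ => ?_
  rw [Measure.map_apply (measurable_pre n) (measurableSet_singleton w)]

lemma integrable_pre (μ : Measure (ℕ → A)) [IsProbabilityMeasure μ] (n : ℕ)
    (f : (Fin n → A) → ℝ) : Integrable (fun x => f (pre n x)) μ := by
  have hm : Measurable f := (continuous_of_discreteTopology).measurable
  have := Measure.isProbabilityMeasure_map (μ := μ) (measurable_pre (A := A) n).aemeasurable
  exact (Integrable.of_finite (μ := μ.map (pre n)) (f := f)).comp_measurable (measurable_pre n)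

lemma Rn_eq (φ : List A → ℝ) (μ : Measure (ℕ → A)) [IsProbabilityMeasure μ] (n : ℕ) :
    Rn φ μ n = ∫ x, Real.log (φ (wordOf x n)) ∂μ :=
  (integral_pre μ n (fun w => Real.log (φ (List.ofFn w)))).symm

lemma integrable_log (φ : List A → ℝ) (μ : Measure (ℕ → A)) [IsProbabilityMeasure μ] (n : ℕ) :
    Integrable (fun x => Real.log (φ (wordOf x n))) μ :=
  integrable_pre μ n (fun w => Real.log (φ (List.ofFn w)))

lemma shift_iter (n : ℕ) (x : ℕ → A) (k : ℕ) : (shiftMap^[n] x) k = x (n + k) := by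
  induction n generalizing x with
  | zero => simp
  | succ n ih =>
    rw [Function.iterate_succ_apply, ih]
    simp only [shiftMap]
    congr 1; omega

lemma pre_add (n m : ℕ) (x : ℕ → A) :
    pre (n + m) x = Fin.append (pre n x) (pre m (shiftMap^[n] x)) := by
  funext i
  refine Fin.addCases (fun i => ?_) (fun i => ?_) i
  · simp [pre]
  · simp [pre, shift_iter]

lemma wordOf_add (n m : ℕ) (x : ℕ → A) :
    wordOf x (n + m) = wordOf x n ++ wordOf (shiftMap^[n] x) m := by
  have : wordOf x (n+m) = List.ofFn (pre (n+m) x) := rfl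
  rw [this, pre_add, List.ofFn_fin_append]
  rfl

lemma mp_iter {μ : Measure (ℕ → A)} (hs : μ.map shiftMap = μ) (n : ℕ) :
    MeasurePreserving (shiftMap^[n]) μ μ :=
  (MeasurePreserving.mk measurable_shift hs).iterate n

lemma lang_wordOf {X : Set (ℕ → A)} {x : ℕ → A} (hx : x ∈ X) (n : ℕ) : Lang X (wordOf x n) := by
  refine ⟨x, ?_, hx⟩
  have : wordOf x n = List.ofFn (pre n x) := rfl
  rw [this, cyl_ofFn]; rfl

lemma iter_mem {X : Set (ℕ → A)} (h : shiftMap '' X ⊆ X) {x : ℕ → A} (hx : x ∈ X) (n : ℕ) :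
    shiftMap^[n] x ∈ X := by
  induction n with
  | zero => exact hx
  | succ n ih => rw [Function.iterate_succ_apply']; exact h ⟨_, ih, rfl⟩

lemma Nn_nonneg (φ : List A → ℝ) (μ : Measure (ℕ → A)) (n : ℕ) : 0 ≤ Nn φ μ n := by
  refine Finset.sum_nonneg fun w _ => ?_
  split_ifs
  · exact pw_nonneg _ _ _
  · exact le_rfl

/-- `N_n = 0` iff a.s. `φ > 0` -/
lemma Nn_zero_iff (φ : List A → ℝ) (μ : Measure (ℕ → A)) [IsProbabilityMeasure μ] (n : ℕ) :
    Nn φ μ n = 0 ↔ ∀ᵐ x ∂μ, 0 < φ (wordOf x n) := by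
  have h1 : (∀ᵐ x ∂μ, 0 < φ (wordOf x n)) ↔
      ∫ x, (fun w : Fin n → A => if φ (List.ofFn w) ≤ 0 then (1:ℝ) else 0) (pre n x) ∂μ = 0 := by
    rw [integral_eq_zero_iff_of_nonneg ?_ (integrable_pre μ n
      (fun w : Fin n → A => if φ (List.ofFn w) ≤ 0 then (1:ℝ) else 0))]
    · refine Filter.eventually_congr (Filter.Eventually.of_forall fun x => ?_)
      change _ ↔ (if φ (wordOf x n) ≤ 0 then (1:ℝ) else 0) = 0
      split_ifs with h
      · simp [h]
      · simp; exact lt_of_not_ge h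
    · intro x; simp only [Pi.zero_apply]; split_ifs <;> norm_num
  rw [h1, integral_pre μ n
    (fun w : Fin n → A => if φ (List.ofFn w) ≤ 0 then (1:ℝ) else 0), Nn]
  simp

lemma Nn_mono {X : Set (ℕ → A)} {φ : List A → ℝ} (hφ : Submult X φ)
    (μ : Measure (ℕ → A)) [IsProbabilityMeasure μ]
    (hXm : ∀ᵐ x ∂μ, x ∈ X) (n m : ℕ) (h : Nn φ μ (n + m) = 0) : Nn φ μ n = 0 := by
  rw [Nn_zero_iff] at h ⊢
  obtain ⟨h0, -, c, hc, hsub⟩ := hφ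
  filter_upwards [h, hXm] with x hx hxX
  by_contra hcon
  have hz : φ (wordOf x n) = 0 := le_antisymm (not_lt.1 hcon) (h0 _ (lang_wordOf hxX n))
  have := hsub (wordOf x n) (wordOf (shiftMap^[n] x) m)
    (by rw [← wordOf_add]; exact lang_wordOf hxX _)
  rw [← wordOf_add, hz] at this
  simp at this
  linarith

lemma Rn_subadd {X : Set (ℕ → A)} {φ : List A → ℝ} (hXs : shiftMap '' X ⊆ X)
    (h0 : ∀ I, Lang X I → 0 ≤ φ I) {c : ℝ} (hc : 0 < c)
    (hsub : ∀ I J : List A, Lang X (I ++ J) → φ (I ++ J) ≤ c⁻¹ * φ I * φ J)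
    (μ : Measure (ℕ → A)) [IsProbabilityMeasure μ] (hs : μ.map shiftMap = μ)
    (hXm : ∀ᵐ x ∂μ, x ∈ X) (hN : ∀ n, Nn φ μ n = 0) :
    Subadditive (fun n => Rn φ μ n - Real.log c) := by
  intro n m
  have key : Rn φ μ (n + m) ≤ Rn φ μ n + Rn φ μ m - Real.log c := by
    have hR : Rn φ μ m = ∫ x, Real.log (φ (wordOf (shiftMap^[n] x) m)) ∂μ := by
      rw [Rn_eq]
      conv_lhs => rw [← (mp_iter hs n).map_eq]
      rw [integral_map (mp_iter hs n).measurable.aemeasurable]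
      rw [(mp_iter hs n).map_eq]
      exact (integrable_log φ μ m).aestronglyMeasurable
    have hi : Integrable (fun x => Real.log (φ (wordOf (shiftMap^[n] x) m))) μ :=
      (mp_iter hs n).integrable_comp_of_integrable (integrable_log φ μ m)
    have hcc : Real.log c = ∫ _x, Real.log c ∂μ := by simp
    rw [hR, Rn_eq, Rn_eq, hcc, ← integral_add' (integrable_log φ μ n) hi,
      ← integral_sub' ((integrable_log φ μ n).add hi) (integrable_const _)]
    refine integral_mono_ae (integrable_log φ μ _)
      (((integrable_log φ μ n).add hi).sub (integrable_const _)) ?_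
    filter_upwards [(Nn_zero_iff φ μ (n+m)).1 (hN _), hXm, (Nn_zero_iff φ μ n).1 (hN _)]
      with x hx hxX hxn
    have h1 := hsub (wordOf x n) (wordOf (shiftMap^[n] x) m)
      (by rw [← wordOf_add]; exact lang_wordOf hxX _)
    rw [← wordOf_add] at h1
    have h2 : 0 < φ (wordOf (shiftMap^[n] x) m) := by
      rcases (h0 _ (lang_wordOf (iter_mem hXs hxX n) m)).lt_or_eq with h | h
      · exact h
      · rw [← h] at h1; simp at h1; linarith
    have h3 := Real.log_le_log hx h1
    rw [Real.log_mul (by positivity) h2.ne', Real.log_mul (by positivity) hxn.ne',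
      Real.log_inv] at h3
    simp only [Pi.sub_apply, Pi.add_apply]
    linarith
  simp only
  linarith

end Helpers

section Helpers2

variable {A : Type} [Fintype A] [TopologicalSpace A] [DiscreteTopology A] [MeasurableSpace A]
  [BorelSpace A]

lemma entropy_joint {α β : Type*} [Fintype α] [Fintype β] (p : α → β → ℝ)
    (hp : ∀ a b, 0 ≤ p a b) (h1 : ∑ a, ∑ b, p a b = 1) :
    ∑ a, ∑ b, Real.negMulLog (p a b) ≤
      ∑ a, Real.negMulLog (∑ b, p a b) + ∑ b, Real.negMulLog (∑ a, p a b) := by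
  set q : α → ℝ := fun a => ∑ b, p a b with hq
  set r : β → ℝ := fun b => ∑ a, p a b with hr
  have hqn : ∀ a, 0 ≤ q a := fun a => Finset.sum_nonneg fun b _ => hp a b
  have hrn : ∀ b, 0 ≤ r b := fun b => Finset.sum_nonneg fun a _ => hp a b
  have hpq : ∀ a b, p a b ≤ q a := fun a b =>
    Finset.single_le_sum (f := fun b => p a b) (fun b _ => hp a b) (Finset.mem_univ b)
  have hpr : ∀ a b, p a b ≤ r b := fun a b =>
    Finset.single_le_sum (f := fun a => p a b) (fun a _ => hp a b) (Finset.mem_univ a)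
  have hterm : ∀ a b, Real.negMulLog (p a b) ≤
      -(p a b * Real.log (q a)) + -(p a b * Real.log (r b)) + (q a * r b - p a b) := by
    intro a b
    rcases (hp a b).eq_or_lt with h | h
    · rw [← h]; simp; exact mul_nonneg (hqn a) (hrn b)
    · have hqa := h.trans_le (hpq a b)
      have hrb := h.trans_le (hpr a b)
      have hl := Real.log_le_sub_one_of_pos (x := q a * r b / p a b) (by positivity)
      rw [Real.log_div (by positivity) h.ne', Real.log_mul hqa.ne' hrb.ne'] at hl
      have h2 := mul_le_mul_of_nonneg_left hl h.le
      have h3 : p a b * (q a * r b / p a b - 1) = q a * r b - p a b := by field_simp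
      rw [h3] at h2
      unfold Real.negMulLog
      nlinarith
  have hsum := Finset.sum_le_sum fun a (_ : a ∈ Finset.univ) =>
    Finset.sum_le_sum fun b (_ : b ∈ Finset.univ) => hterm a b
  refine hsum.trans (le_of_eq ?_)
  simp only [Finset.sum_add_distrib, Finset.sum_sub_distrib]
  have e1 : ∑ a, ∑ b, -(p a b * Real.log (q a)) = ∑ a, Real.negMulLog (q a) := by
    refine Finset.sum_congr rfl fun a _ => ?_
    rw [Finset.sum_neg_distrib, ← Finset.sum_mul, Real.negMulLog, neg_mul]
  have e2 : ∑ a, ∑ b, -(p a b * Real.log (r b)) = ∑ b, Real.negMulLog (r b) := by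
    rw [Finset.sum_comm]
    refine Finset.sum_congr rfl fun a _ => ?_
    rw [Finset.sum_neg_distrib, ← Finset.sum_mul, Real.negMulLog, neg_mul]
  have e3 : ∑ a, ∑ b, q a * r b = 1 := by
    rw [← Finset.sum_mul_sum]
    have : ∑ b, r b = 1 := by rw [hr, Finset.sum_comm]; exact h1
    rw [this, mul_one]; exact h1
  rw [e1, e2, e3, h1]
  ring

lemma pw_append (μ : Measure (ℕ → A)) (n m : ℕ) (a : Fin n → A) (b : Fin m → A) :
    pw μ (n + m) (Fin.append a b) =
      μ.real (pre n ⁻¹' {a} ∩ (fun x => pre m (shiftMap^[n] x)) ⁻¹' {b}) := by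
  unfold pw
  congr 1
  ext x
  simp only [Set.mem_preimage, Set.mem_singleton_iff, Set.mem_inter_iff, pre_add]
  exact ((Fin.appendEquiv (α := A) n m).injective.eq_iff
    (a := (pre n x, pre m (shiftMap^[n] x))) (b := (a, b))).trans Prod.mk_inj

lemma sum_inter_fiber {β : Type*} [Fintype β] [MeasurableSpace β] [MeasurableSingletonClass β]
    (μ : Measure (ℕ → A)) [IsProbabilityMeasure μ] (S : Set (ℕ → A)) (f : (ℕ → A) → β)
    (hf : Measurable f) : ∑ b, μ.real (S ∩ f ⁻¹' {b}) = μ.real S := by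
  have h := sum_measureReal_preimage_singleton (μ := μ.restrict S) (f := f) Finset.univ
    (fun y _ => hf (measurableSet_singleton y))
  rw [Finset.coe_univ, Set.preimage_univ, measureReal_restrict_apply_univ] at h
  rw [← h]
  refine Finset.sum_congr rfl fun b _ => ?_
  rw [measureReal_restrict_apply (hf (measurableSet_singleton b)), Set.inter_comm]

lemma pw_sum (μ : Measure (ℕ → A)) [IsProbabilityMeasure μ] (n : ℕ) :
    ∑ w, pw μ n w = 1 := by
  have := sum_inter_fiber μ Set.univ (pre n) (measurable_pre n)
  simpa [pw] using this

lemma pw_le_one (μ : Measure (ℕ → A)) [IsProbabilityMeasure μ] (n : ℕ) (w : Fin n → A) :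
    pw μ n w ≤ 1 := measureReal_le_one

lemma Hn_subadd (μ : Measure (ℕ → A)) [IsProbabilityMeasure μ] (hs : μ.map shiftMap = μ) :
    Subadditive (Hn μ) := by
  intro n m
  have hm : Measurable (fun x : ℕ → A => pre m (shiftMap^[n] x)) :=
    (measurable_pre m).comp (mp_iter hs n).measurable
  have hmarg1 : ∀ a : Fin n → A, ∑ b : Fin m → A, pw μ (n + m) (Fin.append a b) = pw μ n a := by
    intro a
    simp only [pw_append]
    exact sum_inter_fiber μ _ _ hm
  have hmarg2 : ∀ b : Fin m → A, ∑ a : Fin n → A, pw μ (n + m) (Fin.append a b) = pw μ m b := by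
    intro b
    simp only [pw_append]
    simp_rw [Set.inter_comm (pre n ⁻¹' _)]
    rw [sum_inter_fiber μ _ _ (measurable_pre n)]
    have := (mp_iter hs n).measureReal_preimage
      (s := pre m ⁻¹' {b}) ((measurable_pre m) (measurableSet_singleton b)).nullMeasurableSet
    exact this
  have h := entropy_joint (fun (a : Fin n → A) (b : Fin m → A) => pw μ (n + m) (Fin.append a b))
    (fun a b => pw_nonneg _ _ _) (by simp only [hmarg1]; exact pw_sum μ n)
  simp only [hmarg1, hmarg2] at h
  have e : Hn μ (n + m) =
      ∑ a : Fin n → A, ∑ b : Fin m → A, Real.negMulLog (pw μ (n + m) (Fin.append a b)) := by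
    unfold Hn
    rw [← (Fin.appendEquiv (α := A) n m).sum_comp, Fintype.sum_prod_type]
    rfl
  rw [e]
  exact h

lemma Hn_nonneg (μ : Measure (ℕ → A)) [IsProbabilityMeasure μ] (n : ℕ) : 0 ≤ Hn μ n :=
  Finset.sum_nonneg fun _ _ => Real.negMulLog_nonneg (pw_nonneg _ _ _) (pw_le_one _ _ _)

lemma ent_tendsto {X : Set (ℕ → A)} (hX : MeasurableSet X) (μ : Measure (ℕ → A))
    [IsProbabilityMeasure μ] (h : μ X = 1) (hs : μ.map shiftMap = μ) :
    Tendsto (fun n : ℕ => Hn μ n / n) atTop (𝓝 (ent X μ)) := by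
  have hb : BddBelow (Set.range fun n : ℕ => Hn μ n / n) := by
    refine ⟨0, ?_⟩
    rintro _ ⟨n, rfl⟩
    exact div_nonneg (Hn_nonneg μ n) (Nat.cast_nonneg n)
  have ht := (Hn_subadd μ hs).tendsto_lim hb
  have : ent X μ = (Hn_subadd μ hs).lim := by
    unfold ent
    simp only [Hblock_eq hX μ h]
    exact ht.liminf_eq
  rw [this]; exact ht

lemma pw_comb {μ μ₁ μ₂ : Measure (ℕ → A)} [IsProbabilityMeasure μ₁] [IsProbabilityMeasure μ₂]
    {t : ℝ} (h0 : 0 ≤ t) (h1 : t ≤ 1)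
    (h : μ = ENNReal.ofReal t • μ₁ + ENNReal.ofReal (1 - t) • μ₂) (n : ℕ) (w : Fin n → A) :
    pw μ n w = t * pw μ₁ n w + (1 - t) * pw μ₂ n w := by
  subst h
  unfold pw Measure.real
  rw [Measure.add_apply, Measure.smul_apply, Measure.smul_apply, smul_eq_mul, smul_eq_mul,
    ENNReal.toReal_add, ENNReal.toReal_mul, ENNReal.toReal_mul, ENNReal.toReal_ofReal h0,
    ENNReal.toReal_ofReal (by linarith)]
  · exact ENNReal.mul_ne_top ENNReal.ofReal_ne_top (measure_ne_top _ _)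
  · exact ENNReal.mul_ne_top ENNReal.ofReal_ne_top (measure_ne_top _ _)

lemma Hn_concave {μ μ₁ μ₂ : Measure (ℕ → A)} [IsProbabilityMeasure μ₁] [IsProbabilityMeasure μ₂]
    {t : ℝ} (h0 : 0 ≤ t) (h1 : t ≤ 1)
    (h : μ = ENNReal.ofReal t • μ₁ + ENNReal.ofReal (1 - t) • μ₂) (n : ℕ) :
    t * Hn μ₁ n + (1 - t) * Hn μ₂ n ≤ Hn μ n := by
  unfold Hn
  rw [Finset.mul_sum, Finset.mul_sum, ← Finset.sum_add_distrib]
  refine Finset.sum_le_sum fun w _ => ?_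
  rw [pw_comb h0 h1 h]
  exact Real.concaveOn_negMulLog.2 (Set.mem_Ici.2 (pw_nonneg μ₁ n w))
    (Set.mem_Ici.2 (pw_nonneg μ₂ n w)) h0 (by linarith) (by ring)

lemma negMulLog_add_le {x y : ℝ} (hx : 0 ≤ x) (hy : 0 ≤ y) :
    Real.negMulLog (x + y) ≤ Real.negMulLog x + Real.negMulLog y := by
  rcases hx.eq_or_lt with h | h
  · rw [← h]; simp
  rcases hy.eq_or_lt with h' | h'
  · rw [← h']; simp
  unfold Real.negMulLog
  have e1 := Real.log_le_log h (by linarith : x ≤ x + y)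
  have e2 := Real.log_le_log h' (by linarith : y ≤ x + y)
  nlinarith

lemma Hn_upper {μ μ₁ μ₂ : Measure (ℕ → A)} [IsProbabilityMeasure μ₁] [IsProbabilityMeasure μ₂]
    {t : ℝ} (h0 : 0 ≤ t) (h1 : t ≤ 1)
    (h : μ = ENNReal.ofReal t • μ₁ + ENNReal.ofReal (1 - t) • μ₂) (n : ℕ) :
    Hn μ n ≤ t * Hn μ₁ n + (1 - t) * Hn μ₂ n + (Real.negMulLog t + Real.negMulLog (1 - t)) := by
  have hb : ∀ w, Real.negMulLog (pw μ n w) ≤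
      (t * Real.negMulLog (pw μ₁ n w) + (1 - t) * Real.negMulLog (pw μ₂ n w)) +
      (pw μ₁ n w * Real.negMulLog t + pw μ₂ n w * Real.negMulLog (1 - t)) := by
    intro w
    rw [pw_comb h0 h1 h]
    refine (negMulLog_add_le (mul_nonneg h0 (pw_nonneg _ _ _))
      (mul_nonneg (by linarith) (pw_nonneg _ _ _))).trans (le_of_eq ?_)
    rw [Real.negMulLog_mul, Real.negMulLog_mul]
    ring
  refine (Finset.sum_le_sum fun w _ => hb w).trans (le_of_eq ?_)
  simp only [Finset.sum_add_distrib, ← Finset.mul_sum, ← Finset.sum_mul, pw_sum, one_mul]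
  rfl

lemma Rn_comb (φ : List A → ℝ) {μ μ₁ μ₂ : Measure (ℕ → A)} [IsProbabilityMeasure μ₁]
    [IsProbabilityMeasure μ₂] {t : ℝ} (h0 : 0 ≤ t) (h1 : t ≤ 1)
    (h : μ = ENNReal.ofReal t • μ₁ + ENNReal.ofReal (1 - t) • μ₂) (n : ℕ) :
    Rn φ μ n = t * Rn φ μ₁ n + (1 - t) * Rn φ μ₂ n := by
  unfold Rn
  rw [Finset.mul_sum, Finset.mul_sum, ← Finset.sum_add_distrib]
  refine Finset.sum_congr rfl fun w _ => ?_
  rw [pw_comb h0 h1 h]; ring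

lemma Nn_comb (φ : List A → ℝ) {μ μ₁ μ₂ : Measure (ℕ → A)} [IsProbabilityMeasure μ₁]
    [IsProbabilityMeasure μ₂] {t : ℝ} (h0 : 0 ≤ t) (h1 : t ≤ 1)
    (h : μ = ENNReal.ofReal t • μ₁ + ENNReal.ofReal (1 - t) • μ₂) (n : ℕ) :
    Nn φ μ n = t * Nn φ μ₁ n + (1 - t) * Nn φ μ₂ n := by
  unfold Nn
  rw [Finset.mul_sum, Finset.mul_sum, ← Finset.sum_add_distrib]
  refine Finset.sum_congr rfl fun w _ => ?_
  rw [pw_comb h0 h1 h]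
  split_ifs
  · ring
  · simp

lemma subadd_tendsto {u : ℕ → ℝ} (h : Subadditive u) :
    Tendsto (fun n : ℕ => ((u n / n : ℝ) : EReal)) atTop
      (𝓝 (⨅ (n : ℕ) (_ : n ≠ 0), ((u n / n : ℝ) : EReal))) := by
  refine tendsto_order.2 ⟨fun a ha => ?_, fun a ha => ?_⟩
  · filter_upwards [eventually_ne_atTop 0] with n hn
    exact ha.trans_le (iInf₂_le n hn)
  · obtain ⟨n, hn⟩ := iInf_lt_iff.1 ha
    obtain ⟨hn0, hn⟩ := iInf_lt_iff.1 hn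
    obtain ⟨L, hL1, hL2⟩ := EReal.lt_iff_exists_real_btwn.1 hn
    filter_upwards [h.eventually_div_lt_of_div_lt hn0 (EReal.coe_lt_coe_iff.1 hL1)] with p hp
    exact (EReal.coe_lt_coe_iff.2 hp).trans hL2

lemma intlog_good (φ : List A → ℝ) (μ : Measure (ℕ → A)) [IsProbabilityMeasure μ] (n : ℕ)
    (hN : Nn φ μ n = 0) : intlog μ (genPot φ n) = ((Rn φ μ n : ℝ) : EReal) := by
  rw [Nn_zero_iff] at hN
  have hi := integrable_log φ μ n
  have e : ∫⁻ x, (if genPot φ n x ≤ 0 then (⊤ : ℝ≥0∞)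
      else ENNReal.ofReal (-Real.log (genPot φ n x))) ∂μ =
      ∫⁻ x, ENNReal.ofReal (-Real.log (φ (wordOf x n))) ∂μ := by
    refine lintegral_congr_ae ?_
    filter_upwards [hN] with x hx
    have : ¬ (genPot φ n x ≤ 0) := not_le.2 hx
    rw [if_neg this]; rfl
  unfold intlog
  rw [e]
  change ((∫⁻ x, ENNReal.ofReal (Real.log (φ (wordOf x n))) ∂μ : ℝ≥0∞) : EReal) - _ = _
  rw [Rn_eq, integral_eq_lintegral_pos_part_sub_lintegral_neg_part hi, EReal.coe_sub,
    EReal.coe_ennreal_toReal, EReal.coe_ennreal_toReal]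
  all_goals first | exact hi.neg.lintegral_lt_top.ne | exact hi.lintegral_lt_top.ne

lemma intlog_bad (φ : List A → ℝ) (μ : Measure (ℕ → A)) [IsProbabilityMeasure μ] (n : ℕ)
    (hN : Nn φ μ n ≠ 0) : intlog μ (genPot φ n) = ⊥ := by
  have hi := integrable_log φ μ n
  have e : ∫⁻ x, (if genPot φ n x ≤ 0 then (⊤ : ℝ≥0∞)
      else ENNReal.ofReal (-Real.log (genPot φ n x))) ∂μ = ⊤ := by
    by_contra hcon
    apply hN
    rw [Nn_zero_iff]
    have hm : Measurable (fun x => (if genPot φ n x ≤ 0 then (⊤ : ℝ≥0∞)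
      else ENNReal.ofReal (-Real.log (genPot φ n x)))) := by
      have hf : Measurable (fun w : Fin n → A => (if φ (List.ofFn w) ≤ 0 then (⊤ : ℝ≥0∞)
        else ENNReal.ofReal (-Real.log (φ (List.ofFn w))))) :=
        (continuous_of_discreteTopology).measurable
      exact hf.comp (measurable_pre n)
    filter_upwards [ae_lt_top hm hcon] with x hx
    by_contra h
    have : genPot φ n x ≤ 0 := not_lt.1 h
    simp [this] at hx
  unfold intlog
  rw [e, EReal.coe_ennreal_top]
  exact EReal.sub_top _

lemma eqVal_good {X : Set (ℕ → A)} (hXs : shiftMap '' X ⊆ X) (hX : MeasurableSet X)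
    {φ : List A → ℝ}
    (h0 : ∀ I, Lang X I → 0 ≤ φ I) {c : ℝ} (hc : 0 < c)
    (hsub : ∀ I J : List A, Lang X (I ++ J) → φ (I ++ J) ≤ c⁻¹ * φ I * φ J)
    (μ : ProbabilityMeasure (ℕ → A)) (hμ : μ ∈ MInv X) (hN : ∀ n, Nn φ (μ : Measure (ℕ → A)) n = 0) :
    Subadditive (fun n => Rn φ (μ : Measure (ℕ → A)) n - Real.log c + Hn (μ : Measure (ℕ → A)) n) ∧
    eqVal X (genPot φ) μ = ⨅ (n : ℕ) (_ : n ≠ 0),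
      (((Rn φ (μ : Measure (ℕ → A)) n - Real.log c + Hn (μ : Measure (ℕ → A)) n) / n : ℝ) : EReal) := by
  have hXm : ∀ᵐ x ∂(μ : Measure (ℕ → A)), x ∈ X := (mem_ae_iff_prob_eq_one hX).2 hμ.2
  have hR := Rn_subadd hXs h0 hc hsub (μ : Measure (ℕ → A)) hμ.1 hXm hN
  have hH := Hn_subadd (μ : Measure (ℕ → A)) hμ.1
  have hu : Subadditive (fun n => Rn φ (μ : Measure (ℕ → A)) n - Real.log c +
      Hn (μ : Measure (ℕ → A)) n) := fun m n => by
    have h1 := hR m n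
    have h2 := hH m n
    simp only at h1 h2 ⊢
    linarith
  refine ⟨hu, ?_⟩
  have t1 := subadd_tendsto hR
  have tH := (continuous_coe_real_ereal.tendsto _).comp (ent_tendsto hX (μ : Measure (ℕ → A)) hμ.2 hμ.1)
  have tc : Tendsto (fun n : ℕ => ((Real.log c / n : ℝ) : EReal)) atTop (𝓝 ((0 : ℝ) : EReal)) :=
    (continuous_coe_real_ereal.tendsto _).comp (tendsto_const_div_atTop_nhds_zero_nat _)
  have hP : PhiStar (μ : Measure (ℕ → A)) (genPot φ) = ⨅ (n : ℕ) (_ : n ≠ 0),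
      (((Rn φ (μ : Measure (ℕ → A)) n - Real.log c) / n : ℝ) : EReal) := by
    have t2 := (EReal.continuousAt_add (Or.inr (EReal.coe_ne_bot 0)) (Or.inr (EReal.coe_ne_top 0))).tendsto.comp
      (t1.prodMk_nhds tc)
    rw [EReal.coe_zero, add_zero] at t2
    refine Tendsto.liminf_eq (t2.congr fun n => ?_)
    simp only [Function.comp]
    rw [intlog_good φ _ n (hN n), ← EReal.coe_add, ← EReal.coe_mul]
    congr 1
    ring
  have t3 := (EReal.continuousAt_add (Or.inr (EReal.coe_ne_bot _)) (Or.inr (EReal.coe_ne_top _))).tendsto.comp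
      (t1.prodMk_nhds tH)
  unfold eqVal
  rw [hP]
  refine tendsto_nhds_unique (t3.congr fun n => ?_) (subadd_tendsto hu)
  simp only [Function.comp]
  rw [← EReal.coe_add]
  congr 1
  ring

lemma eqVal_bad {X : Set (ℕ → A)} (hX : MeasurableSet X)
    {φ : List A → ℝ} (hφ : Submult X φ)
    (μ : ProbabilityMeasure (ℕ → A)) (hμ : μ ∈ MInv X) {k : ℕ}
    (hN : Nn φ (μ : Measure (ℕ → A)) k ≠ 0) : eqVal X (genPot φ) μ = ⊥ := by
  have hXm : ∀ᵐ x ∂(μ : Measure (ℕ → A)), x ∈ X := (mem_ae_iff_prob_eq_one hX).2 hμ.2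
  have hP : PhiStar (μ : Measure (ℕ → A)) (genPot φ) = ⊥ := by
    unfold PhiStar
    refine Tendsto.liminf_eq (tendsto_const_nhds.congr' ?_)
    filter_upwards [eventually_ge_atTop (k + 1)] with n hn
    have hb : Nn φ (μ : Measure (ℕ → A)) n ≠ 0 := by
      intro h
      obtain ⟨m, rfl⟩ := Nat.exists_eq_add_of_le (show k ≤ n by omega)
      exact hN (Nn_mono hφ _ hXm k m h)
    rw [intlog_bad φ _ n hb, EReal.coe_mul_bot_of_pos]
    have : (0:ℝ) < n := by exact_mod_cast (by omega : 0 < n)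
    positivity
  unfold eqVal
  rw [hP, EReal.bot_add]

end Helpers2

section Helpers3

variable {A : Type} [Fintype A] [TopologicalSpace A] [DiscreteTopology A] [MeasurableSpace A]
  [BorelSpace A]

lemma le_eqVal_iff {X : Set (ℕ → A)} (hXs : shiftMap '' X ⊆ X) (hX : MeasurableSet X)
    {φ : List A → ℝ} (hφ : Submult X φ) {c : ℝ} (hc : 0 < c)
    (hsub : ∀ I J : List A, Lang X (I ++ J) → φ (I ++ J) ≤ c⁻¹ * φ I * φ J)
    (μ : ProbabilityMeasure (ℕ → A)) (hμ : μ ∈ MInv X) (L : ℝ) :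
    (L : EReal) ≤ eqVal X (genPot φ) μ ↔ ∀ n : ℕ, Nn φ (μ : Measure (ℕ → A)) n = 0 ∧
      (n ≠ 0 → L * n ≤ Rn φ (μ : Measure (ℕ → A)) n - Real.log c + Hn (μ : Measure (ℕ → A)) n) := by
  by_cases hN : ∀ n, Nn φ (μ : Measure (ℕ → A)) n = 0
  · rw [(eqVal_good hXs hX hφ.1 hc hsub μ hμ hN).2]
    simp only [le_iInf_iff, EReal.coe_le_coe_iff]
    refine forall_congr' fun n => ?_
    constructor
    · intro h
      refine ⟨hN n, fun hn => ?_⟩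
      have : (0:ℝ) < n := by exact_mod_cast Nat.pos_of_ne_zero hn
      exact (le_div_iff₀ this).1 (h hn)
    · intro h hn
      have : (0:ℝ) < n := by exact_mod_cast Nat.pos_of_ne_zero hn
      exact (le_div_iff₀ this).2 (h.2 hn)
  · constructor
    · intro h
      push Not at hN
      obtain ⟨k, hk⟩ := hN
      rw [eqVal_bad hX hφ μ hμ hk] at h
      simp at h
    · intro h
      exact absurd (fun n => (h n).1) hN

lemma continuous_pw (n : ℕ) (w : Fin n → A) :
    Continuous (fun μ : ProbabilityMeasure (ℕ → A) => pw (μ : Measure (ℕ → A)) n w) := by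
  rw [continuous_iff_continuousAt]
  intro μ
  have h := ProbabilityMeasure.tendsto_measure_of_isClopen_of_tendsto (μ := μ)
    (μs := fun ν : ProbabilityMeasure (ℕ → A) => ν) (L := 𝓝 μ) tendsto_id
    (isClopen_pre (A := A) (n := n) {w})
  exact (NNReal.continuous_coe.tendsto _).comp h

lemma isClosed_prob {X : Set (ℕ → A)} (hX : IsClosed X) :
    IsClosed {μ : ProbabilityMeasure (ℕ → A) | (μ : Measure (ℕ → A)) X = 1} := by
  rw [isClosed_iff_ultrafilter]
  intro μ u hu hs
  have h := ProbabilityMeasure.limsup_measure_closed_le_of_tendsto (μ := μ)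
    (μs := fun ν : ProbabilityMeasure (ℕ → A) => ν) (L := (u : Filter _))
    (by simpa [Tendsto] using hu) hX
  have h1 : limsup (fun ν : ProbabilityMeasure (ℕ → A) => (ν : Measure (ℕ → A)) X)
      (u : Filter _) = 1 := by
    refine Tendsto.limsup_eq (tendsto_const_nhds.congr' ?_)
    filter_upwards [hs] with ν hν
    exact Eq.symm hν
  rw [h1] at h
  exact le_antisymm prob_le_one h

lemma isClosed_MInv {X : Set (ℕ → A)} (hX : IsClosed X) :
    IsClosed (MInv X : Set (ProbabilityMeasure (ℕ → A))) := by
  have h1 : IsClosed {μ : ProbabilityMeasure (ℕ → A) |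
      μ.map (continuous_shift (A := A)).measurable.aemeasurable = μ} :=
    isClosed_eq (ProbabilityMeasure.continuous_map continuous_shift) continuous_id
  have : (MInv X : Set (ProbabilityMeasure (ℕ → A))) = {μ : ProbabilityMeasure (ℕ → A) |
      μ.map (continuous_shift (A := A)).measurable.aemeasurable = μ} ∩
      {μ : ProbabilityMeasure (ℕ → A) | (μ : Measure (ℕ → A)) X = 1} := by
    ext μ
    refine and_congr_left' ?_
    constructor
    · intro h
      exact Subtype.ext h
    · intro h
      exact congrArg (fun ν : ProbabilityMeasure (ℕ → A) => (ν : Measure (ℕ → A))) h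
  rw [this]
  exact h1.inter (isClosed_prob hX)

/-- empirical measures -/
noncomputable def empM (x : ℕ → A) (n : ℕ) : Measure (ℕ → A) :=
  ((n : ℝ≥0∞) + 1)⁻¹ • ∑ i ∈ Finset.range (n + 1), Measure.dirac (shiftMap^[i] x)

lemma empM_of_mem {X : Set (ℕ → A)} (hXs : shiftMap '' X ⊆ X) {x : ℕ → A} (hx : x ∈ X) (n : ℕ) :
    empM x n X = 1 := by
  unfold empM
  rw [Measure.smul_apply, Measure.finsetSum_apply]
  have : ∀ i ∈ Finset.range (n + 1), (Measure.dirac (shiftMap^[i] x)) X = 1 := fun i _ =>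
    Measure.dirac_apply_of_mem (iter_mem hXs hx i)
  rw [Finset.sum_congr rfl this]
  simp only [Finset.sum_const, Finset.card_range, nsmul_eq_mul, mul_one, smul_eq_mul]
  push_cast
  exact ENNReal.inv_mul_cancel (by simp) (by finiteness)

instance (x : ℕ → A) (n : ℕ) : IsProbabilityMeasure (empM x n) :=
  ⟨empM_of_mem (X := Set.univ) (Set.subset_univ _) (Set.mem_univ x) n⟩

lemma integral_empM (x : ℕ → A) (n : ℕ) (f : (ℕ → A) → ℝ) :
    ∫ y, f y ∂(empM x n) = ((n : ℝ) + 1)⁻¹ * ∑ i ∈ Finset.range (n + 1), f (shiftMap^[i] x) := by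
  unfold empM
  rw [integral_smul_measure, integral_finsetSum_measure]
  · simp only [integral_dirac, smul_eq_mul]
    congr 1
    rw [ENNReal.toReal_inv, ENNReal.toReal_add (by finiteness) (by finiteness)]
    simp
  · intro i _
    exact integrable_dirac (by finiteness)

lemma MInv_nonempty {X : Set (ℕ → A)} (hX : IsSubshift X) :
    (MInv X : Set (ProbabilityMeasure (ℕ → A))).Nonempty := by
  obtain ⟨⟨x, hx⟩, hXc, hXs⟩ := hX
  let ν : ℕ → ProbabilityMeasure (ℕ → A) := fun n => ⟨empM x n, inferInstance⟩
  let u : Ultrafilter (ProbabilityMeasure (ℕ → A)) := (Filter.hyperfilter ℕ).map ν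
  obtain ⟨μ, -, hμ⟩ := isCompact_univ.ultrafilter_le_nhds u (by simp)
  have ht : Tendsto ν (Filter.hyperfilter ℕ : Filter ℕ) (𝓝 μ) := hμ
  refine ⟨μ, ?_, ?_⟩
  · have t1 := ProbabilityMeasure.tendsto_map_of_tendsto_of_continuous _ _ ht
      (continuous_shift (A := A))
    have t2 : Tendsto (fun i => (ν i).map (continuous_shift (A := A)).measurable.aemeasurable)
        (Filter.hyperfilter ℕ : Filter ℕ) (𝓝 μ) := by
      rw [ProbabilityMeasure.tendsto_iff_forall_integral_tendsto] at ht ⊢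
      intro f
      have hfm : Measurable (f : (ℕ → A) → ℝ) := f.continuous.measurable
      have hz : Tendsto (fun n : ℕ => ((n : ℝ) + 1)⁻¹ * (f (shiftMap^[n + 1] x) - f x)) atTop
          (𝓝 0) := by
        have h1 : Tendsto (fun n : ℕ => ((n : ℝ) + 1)⁻¹) atTop (𝓝 0) := by
          simpa [one_div] using tendsto_one_div_add_atTop_nhds_zero_nat (𝕜 := ℝ)
        refine h1.zero_mul_isBoundedUnder_le ?_
        refine isBoundedUnder_of ⟨‖f‖ + ‖f‖, fun n => ?_⟩
        exact (norm_sub_le _ _).trans (add_le_add (f.norm_coe_le_norm _) (f.norm_coe_le_norm _))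
      have := (ht f).add (hz.mono_left Nat.hyperfilter_le_atTop)
      rw [add_zero] at this
      refine this.congr fun n => ?_
      rw [ProbabilityMeasure.toMeasure_map]
      rw [integral_map (measurable_shift.aemeasurable) hfm.aestronglyMeasurable]
      change ∫ y, f y ∂(empM x n) + _ = ∫ y, f (shiftMap y) ∂(empM x n)
      rw [integral_empM x n f, integral_empM x n (fun y => f (shiftMap y)), ← mul_add]
      congr 1
      simp only [← Function.iterate_succ_apply']
      rw [Finset.sum_range_succ', Finset.sum_range_succ]
      simp
    have := tendsto_nhds_unique t1 t2
    exact congrArg (fun ν : ProbabilityMeasure (ℕ → A) => (ν : Measure (ℕ → A))) this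
  · exact (isClosed_prob hXc.isClosed).mem_of_tendsto ht
      (Filter.Eventually.of_forall fun n => empM_of_mem hXs hx n)

lemma MInv_convex {X : Set (ℕ → A)} {μ μ₁ μ₂ : ProbabilityMeasure (ℕ → A)}
    (h₁ : μ₁ ∈ MInv X) (h₂ : μ₂ ∈ MInv X) {t : ℝ} (h0 : 0 ≤ t) (h1 : t ≤ 1)
    (h : (μ : Measure (ℕ → A)) = ENNReal.ofReal t • (μ₁ : Measure (ℕ → A)) +
      ENNReal.ofReal (1 - t) • (μ₂ : Measure (ℕ → A))) : μ ∈ MInv X := by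
  constructor
  · rw [h, Measure.map_add _ _ measurable_shift, Measure.map_smul, Measure.map_smul, h₁.1, h₂.1]
  · rw [h, Measure.add_apply, Measure.smul_apply, Measure.smul_apply, h₁.2, h₂.2, smul_eq_mul,
      smul_eq_mul, mul_one, mul_one, ← ENNReal.ofReal_add h0 (by linarith)]
    simp

lemma mem_EqSet_iff {X : Set (ℕ → A)} {φ : ℕ → (ℕ → A) → ℝ} (μ : ProbabilityMeasure (ℕ → A)) :
    μ ∈ EqSet X φ ↔ μ ∈ MInv X ∧ ∀ L : ℝ, (L : EReal) < (⨆ η ∈ MInv X, eqVal X φ η) →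
      (L : EReal) ≤ eqVal X φ μ := by
  refine and_congr_right fun hμ => ?_
  constructor
  · intro h L hL
    rw [h]; exact hL.le
  · intro h
    refine le_antisymm (le_iSup₂ (f := fun η (_ : η ∈ MInv X) => eqVal X φ η) μ hμ) ?_
    by_contra hcon
    obtain ⟨L, hL1, hL2⟩ := EReal.lt_iff_exists_real_btwn.1 (not_le.1 hcon)
    exact absurd (h L hL2) (not_le.2 hL1)

lemma split_mem {X : Set (ℕ → A)} (hXs : shiftMap '' X ⊆ X) (hX : MeasurableSet X)
    {φ : List A → ℝ} (hφ : Submult X φ)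
    {μ μ₁ μ₂ : ProbabilityMeasure (ℕ → A)} (hμ : μ ∈ EqSet X (genPot φ))
    (h₁ : μ₁ ∈ MInv X) (h₂ : μ₂ ∈ MInv X) {t : ℝ} (h0 : 0 < t) (h1 : t < 1)
    (h : (μ : Measure (ℕ → A)) = ENNReal.ofReal t • (μ₁ : Measure (ℕ → A)) +
      ENNReal.ofReal (1 - t) • (μ₂ : Measure (ℕ → A))) : μ₁ ∈ EqSet X (genPot φ) := by
  obtain ⟨c, hc, hsub⟩ := hφ.2.2
  rw [mem_EqSet_iff]
  refine ⟨h₁, fun L hL => ?_⟩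
  rw [← hμ.2] at hL
  by_contra hcon
  rw [not_le] at hcon
  have hle : ∀ η ∈ MInv X, eqVal X (genPot φ) η ≤ eqVal X (genPot φ) μ := fun η hη => by
    rw [hμ.2]; exact le_iSup₂ (f := fun η (_ : η ∈ MInv X) => eqVal X (genPot φ) η) η hη
  have hiff := le_eqVal_iff hXs hX hφ hc hsub μ hμ.1
  have htop : eqVal X (genPot φ) μ ≠ ⊤ := by
    intro ht
    rw [ht] at hiff
    have := ((hiff (Rn φ (μ : Measure (ℕ → A)) 1 - Real.log c +
      Hn (μ : Measure (ℕ → A)) 1 + 1)).1 le_top 1).2 one_ne_zero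
    push_cast at this
    linarith
  obtain ⟨s, hs⟩ : ∃ s : ℝ, (s : EReal) = eqVal X (genPot φ) μ :=
    ⟨_, EReal.coe_toReal htop (ne_bot_of_gt hL)⟩
  rw [← hs] at hL hle hiff
  have hLs : L < s := EReal.coe_lt_coe_iff.1 hL
  have hall := (hiff s).1 le_rfl
  have hN12 : ∀ n, Nn φ (μ₁ : Measure (ℕ → A)) n = 0 ∧ Nn φ (μ₂ : Measure (ℕ → A)) n = 0 := by
    intro n
    have e := Nn_comb φ h0.le h1.le h n
    rw [(hall n).1] at e
    have n1 := Nn_nonneg φ (μ₁ : Measure (ℕ → A)) n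
    have n2 := Nn_nonneg φ (μ₂ : Measure (ℕ → A)) n
    have p1 := mul_nonneg h0.le n1
    have p2 := mul_nonneg (by linarith : 0 ≤ 1 - t) n2
    constructor
    · have : t * Nn φ (μ₁ : Measure (ℕ → A)) n = 0 := by linarith
      exact (mul_eq_zero.1 this).resolve_left h0.ne'
    · have : (1 - t) * Nn φ (μ₂ : Measure (ℕ → A)) n = 0 := by linarith
      exact (mul_eq_zero.1 this).resolve_left (by linarith)
  have key : ∀ η ∈ MInv X, (∀ n, Nn φ (η : Measure (ℕ → A)) n = 0) → ∀ M : ℝ,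
      eqVal X (genPot φ) η < M → ∀ᶠ n : ℕ in atTop,
      (Rn φ (η : Measure (ℕ → A)) n - Real.log c + Hn (η : Measure (ℕ → A)) n) / n < M := by
    intro η hη hNη M hM
    obtain ⟨hsa, hv⟩ := eqVal_good hXs hX hφ.1 hc hsub η hη hNη
    rw [hv] at hM
    obtain ⟨n, hn⟩ := iInf_lt_iff.1 hM
    obtain ⟨hn0, hn⟩ := iInf_lt_iff.1 hn
    exact hsa.eventually_div_lt_of_div_lt hn0 (EReal.coe_lt_coe_iff.1 hn)
  set δ := t * (s - L) / 2 with hδ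
  have hδ0 : 0 < δ := by rw [hδ]; have := sub_pos.2 hLs; positivity
  have ev1 := key μ₁ h₁ (fun n => (hN12 n).1) L hcon
  have ev2 := key μ₂ h₂ (fun n => (hN12 n).2) (s + δ)
    ((hle μ₂ h₂).trans_lt (EReal.coe_lt_coe_iff.2 (by linarith)))
  set K := Real.negMulLog t + Real.negMulLog (1 - t) with hK
  have hlim : Tendsto (fun n : ℕ => t * L + (1 - t) * (s + δ) + K / n) atTop
      (𝓝 (t * L + (1 - t) * (s + δ) + 0)) :=
    tendsto_const_nhds.add (tendsto_const_div_atTop_nhds_zero_nat K)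
  have hge : s ≤ t * L + (1 - t) * (s + δ) + 0 := by
    refine ge_of_tendsto hlim ?_
    filter_upwards [ev1, ev2, eventually_ne_atTop 0] with n e1 e2 hn
    have hn' : (0:ℝ) < n := by exact_mod_cast Nat.pos_of_ne_zero hn
    have a1 := (hall n).2 hn
    have a2 := Rn_comb φ h0.le h1.le h n
    have a3 := Hn_upper h0.le h1.le h n
    rw [div_lt_iff₀ hn'] at e1 e2
    have b1 := mul_le_mul_of_nonneg_left e1.le h0.le
    have b2 := mul_le_mul_of_nonneg_left e2.le (by linarith : 0 ≤ 1 - t)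
    have : s * n ≤ (t * L + (1 - t) * (s + δ)) * n + K := by
      rw [a2] at a1
      nlinarith
    have h3 : (t * L + (1 - t) * (s + δ) + K / n) * n =
        (t * L + (1 - t) * (s + δ)) * n + K := by field_simp
    rw [← h3] at this
    exact le_of_mul_le_mul_right this hn'
  have : (1 - t) * δ ≤ δ := by nlinarith
  nlinarith

lemma cond_mem_MInv {X : Set (ℕ → A)} (hX : MeasurableSet X)
    {μ : ProbabilityMeasure (ℕ → A)} (hμ : μ ∈ MInv X) {s : Set (ℕ → A)} (hs : MeasurableSet s)
    (hinv : shiftMap ⁻¹' s = s) (h0 : (μ : Measure (ℕ → A)) s ≠ 0) :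
    ∃ μ₁ : ProbabilityMeasure (ℕ → A), μ₁ ∈ MInv X ∧ (μ₁ : Measure (ℕ → A)) =
      ((μ : Measure (ℕ → A)) s)⁻¹ • (μ : Measure (ℕ → A)).restrict s := by
  have hp := ProbabilityTheory.cond_isProbabilityMeasure (μ := (μ : Measure (ℕ → A))) h0
  refine ⟨⟨ProbabilityTheory.cond (μ : Measure (ℕ → A)) s, hp⟩, ⟨?_, ?_⟩, rfl⟩
  · change Measure.map shiftMap (((μ : Measure (ℕ → A)) s)⁻¹ • (μ : Measure (ℕ → A)).restrict s) =
      ((μ : Measure (ℕ → A)) s)⁻¹ • (μ : Measure (ℕ → A)).restrict s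
    rw [Measure.map_smul]
    congr 1
    have := Measure.restrict_map (μ := (μ : Measure (ℕ → A))) measurable_shift hs
    rw [hinv, hμ.1] at this
    exact this.symm
  · change (ProbabilityTheory.cond (μ : Measure (ℕ → A)) s) X = 1
    rw [← prob_compl_eq_zero_iff hX]
    exact ProbabilityTheory.cond_absolutelyContinuous ((prob_compl_eq_zero_iff hX).2 hμ.2)

lemma extreme_ergodic {X : Set (ℕ → A)} (hXs : shiftMap '' X ⊆ X) (hX : MeasurableSet X)
    {φ : List A → ℝ} (hφ : Submult X φ) (μ : ProbabilityMeasure (ℕ → A))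
    (hμ : IsExtremePM (EqSet X (genPot φ)) μ) : Ergodic shiftMap (μ : Measure (ℕ → A)) := by
  have hM : μ ∈ MInv X := hμ.1.1
  refine ⟨⟨measurable_shift, hM.1⟩, ⟨fun s hs hinv => ?_⟩⟩
  rw [Filter.eventuallyConst_set']
  by_contra hcon
  rw [not_or] at hcon
  have hs0 : (μ : Measure (ℕ → A)) s ≠ 0 := fun h => hcon.1 (ae_eq_empty.2 h)
  have hs1 : (μ : Measure (ℕ → A)) sᶜ ≠ 0 := fun h => hcon.2 (ae_eq_univ.2 h)
  obtain ⟨μ₁, hm1, e1⟩ := cond_mem_MInv hX hM hs hinv hs0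
  obtain ⟨μ₂, hm2, e2⟩ := cond_mem_MInv hX hM hs.compl (by rw [Set.preimage_compl, hinv]) hs1
  set t : ℝ := (μ : Measure (ℕ → A)).real s with ht
  have htt : (μ : Measure (ℕ → A)).real sᶜ = 1 - t := probReal_compl_eq_one_sub hs
  have et : ENNReal.ofReal t = (μ : Measure (ℕ → A)) s := ENNReal.ofReal_toReal (measure_ne_top _ _)
  have et' : ENNReal.ofReal (1 - t) = (μ : Measure (ℕ → A)) sᶜ := by
    rw [← htt]; exact ENNReal.ofReal_toReal (measure_ne_top _ _)
  have ht0 : 0 < t := ENNReal.toReal_pos hs0 (measure_ne_top _ _)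
  have ht1 : t < 1 := by
    have : 0 < (μ : Measure (ℕ → A)).real sᶜ := ENNReal.toReal_pos hs1 (measure_ne_top _ _)
    linarith
  have hcomb : (μ : Measure (ℕ → A)) = ENNReal.ofReal t • (μ₁ : Measure (ℕ → A)) +
      ENNReal.ofReal (1 - t) • (μ₂ : Measure (ℕ → A)) := by
    rw [e1, e2, et, et', smul_smul, smul_smul, ENNReal.mul_inv_cancel hs0 (measure_ne_top _ _),
      ENNReal.mul_inv_cancel hs1 (measure_ne_top _ _), one_smul, one_smul,
      Measure.restrict_add_restrict_compl hs]
  have m1 := split_mem hXs hX hφ hμ.1 hm1 hm2 ht0 ht1 hcomb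
  have m2 := split_mem hXs hX hφ hμ.1 hm2 hm1 (t := 1 - t) (by linarith) (by linarith)
    (by rw [sub_sub_cancel, add_comm]; exact hcomb)
  have heq := hμ.2 μ₁ m1 μ₂ m2 t ht0 ht1 hcomb
  have v1 : (μ₁ : Measure (ℕ → A)) s = 1 := by
    rw [e1, Measure.smul_apply, Measure.restrict_apply_self, smul_eq_mul,
      ENNReal.inv_mul_cancel hs0 (measure_ne_top _ _)]
  have v2 : (μ₂ : Measure (ℕ → A)) s = 0 := by
    rw [e2, Measure.smul_apply, Measure.restrict_apply hs, Set.inter_compl_self]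
    simp
  rw [heq, v2] at v1
  exact zero_ne_one v1

end Helpers3

/-- Proposition 3.2(ii) / `pro-2.1`(ii): the set of equilibrium states of a
potential generated by a sub-multiplicative word function is non-empty, compact, convex,
and its extreme points are ergodic. -/
theorem weighted_eq_states_stmt_4 {A : Type} [Fintype A] [TopologicalSpace A]
    [DiscreteTopology A] [MeasurableSpace A] [BorelSpace A]
    (X : Set (ℕ → A)) (hX : IsSubshift X)
    (φ : List A → ℝ) (hφ : Submult X φ) :
    (EqSet X (genPot φ)).Nonempty ∧ IsCompact (EqSet X (genPot φ)) ∧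
      ConvexPM (EqSet X (genPot φ)) ∧
      ∀ μ : ProbabilityMeasure (ℕ → A), IsExtremePM (EqSet X (genPot φ)) μ →
        Ergodic shiftMap (μ : Measure (ℕ → A)) := by
  obtain ⟨hne, hXc, hXs⟩ := id hX
  have hXcl : IsClosed X := hXc.isClosed
  have hXm : MeasurableSet X := hXcl.measurableSet
  obtain ⟨c, hc, hsub⟩ := hφ.2.2
  have hcl := isClosed_MInv hXcl
  set S : EReal := ⨆ η ∈ MInv X, eqVal X (genPot φ) η with hS
  let K : {L : ℝ // (L : EReal) < S} → Set (ProbabilityMeasure (ℕ → A)) := fun L =>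
    {μ | ∀ n : ℕ, Nn φ (μ : Measure (ℕ → A)) n = 0 ∧
      (n ≠ 0 → L.1 * n ≤ Rn φ (μ : Measure (ℕ → A)) n - Real.log c + Hn (μ : Measure (ℕ → A)) n)}
  have hKcl : ∀ L, IsClosed (K L) := by
    intro L
    have : K L = ⋂ n : ℕ, ({μ : ProbabilityMeasure (ℕ → A) | Nn φ (μ : Measure (ℕ → A)) n = 0} ∩
        {μ : ProbabilityMeasure (ℕ → A) | n ≠ 0 → L.1 * n ≤ Rn φ (μ : Measure (ℕ → A)) n -
          Real.log c + Hn (μ : Measure (ℕ → A)) n}) := by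
      ext μ; simp [K]
    rw [this]
    refine isClosed_iInter fun n => IsClosed.inter ?_ ?_
    · refine isClosed_eq ?_ continuous_const
      unfold Nn
      refine continuous_finsetSum _ fun w _ => ?_
      split_ifs
      · exact continuous_pw n w
      · exact continuous_const
    · by_cases hn : n = 0
      · simp [hn]
      · simp only [ne_eq, hn, not_false_eq_true, true_imp_iff]
        refine isClosed_le continuous_const ?_
        unfold Rn Hn
        refine ((continuous_finsetSum _ fun w _ => ?_).sub continuous_const).add
          (continuous_finsetSum _ fun w _ => ?_)
        · exact (continuous_pw n w).mul continuous_const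
        · exact Real.continuous_negMulLog.comp (continuous_pw n w)
  have hEq : EqSet X (genPot φ) = MInv X ∩ ⋂ L, K L := by
    ext μ
    rw [mem_EqSet_iff]
    refine and_congr_right fun hμ => ?_
    rw [Set.mem_iInter, ← hS]
    constructor
    · intro h L
      exact (le_eqVal_iff hXs hXm hφ hc hsub μ hμ L.1).1 (h L.1 L.2)
    · intro h L hL
      exact (le_eqVal_iff hXs hXm hφ hc hsub μ hμ L).2 (h ⟨L, hL⟩)
  refine ⟨?_, ?_, ?_, fun μ hμ => extreme_ergodic hXs hXm hφ μ hμ⟩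
  · rw [hEq]
    refine hcl.isCompact.inter_iInter_nonempty K hKcl fun u => ?_
    rcases u.eq_empty_or_nonempty with rfl | hu
    · simpa using MInv_nonempty hX
    · obtain ⟨L, -, hmax⟩ := Finset.exists_max_image u (fun L => L.1) hu
      have hL : ((L.1 : ℝ) : EReal) < ⨆ η ∈ MInv X, eqVal X (genPot φ) η := L.2
      obtain ⟨η, hη⟩ := lt_iSup_iff.1 hL
      obtain ⟨hηM, hη⟩ := lt_iSup_iff.1 hη
      refine ⟨η, hηM, ?_⟩
      refine Set.mem_iInter₂.2 fun L' hL' => ?_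
      exact (le_eqVal_iff hXs hXm hφ hc hsub η hηM L'.1).1
        ((EReal.coe_le_coe_iff.2 (hmax L' hL')).trans hη.le)
  · rw [hEq]
    exact (hcl.inter (isClosed_iInter hKcl)).isCompact
  · intro μ₁ hμ₁ μ₂ hμ₂ t h0 h1 μ h
    rw [hEq] at hμ₁ hμ₂ ⊢
    refine ⟨MInv_convex hμ₁.1 hμ₂.1 h0 h1 h, ?_⟩
    rw [Set.mem_iInter]
    intro L n
    have k1 := Set.mem_iInter.1 hμ₁.2 L n
    have k2 := Set.mem_iInter.1 hμ₂.2 L n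
    refine ⟨?_, fun hn => ?_⟩
    · rw [Nn_comb φ h0 h1 h n, k1.1, k2.1]; ring
    · have a1 := mul_le_mul_of_nonneg_left (k1.2 hn) h0
      have a2 := mul_le_mul_of_nonneg_left (k2.2 hn) (by linarith : 0 ≤ 1 - t)
      have a3 := Hn_concave h0 h1 h n
      rw [Rn_comb φ h0 h1 h n]
      nlinarith
end
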